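/- Let b₁ < 0 < b₂, B = diag(b₁,b₂), and Q(x) = [[0,Q₁₂(x)],[Q₂₁(x),0]] with Q₁₂, Q₂₁ ∈ L¹[0,1]. Let Δ(λ) be the characteristic determinant of the boundary value problem −i B⁻¹ y′ + Q y = λ y, U_j(y) = a_{j1} y₁(0) + a_{j2} y₂(0) + a_{j3} y₁(1) + a_{j4} y₂(1) = 0 (j = 1,2), and assume the boundary conditions are regular: J₁₄ J₃₂ ≠ 0. Then: (1) Δ has infinitely many zeros and there exists h > 0 such that all zeros of Δ lie in the strip Π_h = {λ : |Im λ| ≤ h}; (2) for every ε > 0 there exists C_ε > 0 such that |Δ(λ)| ≥ C_ε (e^{−b₁ Im λ} + e^{−b₂ Im λ}) for every λ ∈ ℂ whose distance to the zero set of Δ is at least ε. -/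

import Mathlib

/-!
The proof rests on three properties of `Δ`, after which only complex analysis is used.

*Growth and asymptotics.* Removing the free exponential `e^{i b₁ λ x}` from a solution and applying
Duhamel's formula with Grönwall's inequality for an `L¹` coefficient (`DSol.bound`) bounds the
fundamental matrix by a constant times `e^{-b₁ x Im λ} + e^{-b₂ x Im λ}`, hence
`|Δ(λ)| ≤ M (e^{-b₁ Im λ} + e^{-b₂ Im λ})` (`charDet_le`). As `Im λ → +∞` the Duhamel integrals
vanish by dominated convergence (`weighted_tendsto`, `DSol.limits`), so that
`e^{-i b₁ λ} Δ(λ) → J₃₂`; exchanging the two components gives `e^{-i b₂ λ} Δ(λ) → J₁₄` as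
`Im λ → -∞`. Both limits are uniform in `Re λ`. As `J₁₄ J₃₂ ≠ 0`, this bounds `|Δ|` from below
outside a strip (`exists_strip`), which confines the zeros to it.

*Analyticity.* The Wronskian of solutions for two parameters `λ`, `μ` equals its initial value plus
`μ - λ` times an integral that is continuous in `μ`. The solutions for `μ` are recovered from the
Wronskians with the fundamental system at `λ`, so the fundamental matrix at `x = 1` is complex
differentiable in the parameter (`IsFundSol.entire`).

*Minimum modulus.* In the strip the translates of `Δ` are uniformly bounded on discs and are bounded
away from zero at a point on the edge of the strip. If such functions had no zeros in the `ε`-disc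
about the centre but arbitrarily small central values, a Montel limit would be a nonzero holomorphic
function vanishing at the centre, and the maximum principle for the reciprocals on a small circle
gives a contradiction (`norm_center_ge`). This yields the second assertion.

*Infinitude of zeros.* If `Δ` had finitely many zeros, then by the lower bound `e^{i b₁ λ} / Δ(λ)`
would be bounded, analytic and zero-free near infinity, so it would have at most a zero of finite
order there; but it decays like `e^{-(b₂ - b₁) t}` along `λ = -i t` (`not_exp_decay`).
-/

open MeasureTheory Set Complex Filter ComplexConjugate
open scoped ENNReal NNReal

noncomputable section

/-- Lebesgue measure restricted to `[0,1]`. -/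
def μ01 : Measure ℝ := volume.restrict (Set.Icc (0:ℝ) 1)

/-- `y` is a `W^{1,1}` solution on `[0,1]` of the Dirac type system
`-i B⁻¹ y' + Q(x) y = λ y`, with `B = diag(b₁,b₂)` and `Q = [[0,Q₁₂],[Q₂₁,0]]`. -/
def IsSol (b₁ b₂ : ℝ) (Q₁₂ Q₂₁ : ℝ → ℂ) (l : ℂ) (y : ℝ → Fin 2 → ℂ) : Prop :=
  ∃ g : ℝ → Fin 2 → ℂ,
    (∀ i, IntegrableOn (fun t => g t i) (Set.Icc (0:ℝ) 1)) ∧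
    (∀ x ∈ Set.Icc (0:ℝ) 1, ∀ i, y x i = y 0 i + ∫ t in (0:ℝ)..x, g t i) ∧
    (∀ᵐ x ∂μ01,
      -Complex.I * ((b₁:ℂ))⁻¹ * g x 0 + Q₁₂ x * y x 1 = l * y x 0 ∧
      -Complex.I * ((b₂:ℂ))⁻¹ * g x 1 + Q₂₁ x * y x 0 = l * y x 1)

/-- `Φ` is the fundamental matrix solution of `-i B⁻¹ Y' + Q Y = λ Y`, `Φ(0,λ) = I₂`;
`Φ l x j k` is the entry `φ_{jk}(x,λ)` and the `k`-th column solves the system. -/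
def IsFundSol (b₁ b₂ : ℝ) (Q₁₂ Q₂₁ : ℝ → ℂ) (Φ : ℂ → ℝ → Fin 2 → Fin 2 → ℂ) : Prop :=
  ∀ l : ℂ, (∀ j k : Fin 2, Φ l 0 j k = if j = k then 1 else 0) ∧
    ∀ k : Fin 2, IsSol b₁ b₂ Q₁₂ Q₂₁ l (fun x j => Φ l x j k)

/-- `J_{jk}`: the determinant of the `2×2` matrix formed by columns `j` and `k`
(0-indexed) of the `2×4` coefficient matrix `aM`. -/
def Jdet (aM : Fin 2 → Fin 4 → ℂ) (j k : Fin 4) : ℂ :=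
  aM 0 j * aM 1 k - aM 0 k * aM 1 j

/-- The boundary form `U_j(y) = a_{j1} y₁(0) + a_{j2} y₂(0) + a_{j3} y₁(1) + a_{j4} y₂(1)`
expressed through the boundary values `y0 = y(0)` and `y1 = y(1)`. -/
def bform (aM : Fin 2 → Fin 4 → ℂ) (j : Fin 2) (y0 y1 : Fin 2 → ℂ) : ℂ :=
  aM j 0 * y0 0 + aM j 1 * y0 1 + aM j 2 * y1 0 + aM j 3 * y1 1

/-- The characteristic determinant `Δ(λ) = det (U_j(Φ_k(·,λ)))_{j,k}`. -/
def charDet (aM : Fin 2 → Fin 4 → ℂ) (Φ : ℂ → ℝ → Fin 2 → Fin 2 → ℂ) (l : ℂ) : ℂ :=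
  bform aM 0 (fun i => Φ l 0 i 0) (fun i => Φ l 1 i 0) *
    bform aM 1 (fun i => Φ l 0 i 1) (fun i => Φ l 1 i 1) -
  bform aM 0 (fun i => Φ l 0 i 1) (fun i => Φ l 1 i 1) *
    bform aM 1 (fun i => Φ l 0 i 0) (fun i => Φ l 1 i 0)

/-- `Δ₀(λ) = J₁₂ + J₃₄ e^{i(b₁+b₂)λ} + J₃₂ e^{i b₁ λ} + J₁₄ e^{i b₂ λ}`, the characteristic
determinant of the unperturbed (`Q = 0`) problem. -/
def Delta0 (b₁ b₂ : ℝ) (aM : Fin 2 → Fin 4 → ℂ) (l : ℂ) : ℂ :=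
  Jdet aM 0 1 + Jdet aM 2 3 * Complex.exp (Complex.I * ((b₁:ℂ) + (b₂:ℂ)) * l) +
    Jdet aM 2 1 * Complex.exp (Complex.I * (b₁:ℂ) * l) +
    Jdet aM 0 3 * Complex.exp (Complex.I * (b₂:ℂ) * l)

open scoped Topology

/-! ### Absolutely continuous functions given by a primitive -/

/-- Absolute continuity passes to a function whose increments are dominated by those of an
absolutely continuous one. -/
lemma ac_of_dist_le {X Y : Type*} [PseudoMetricSpace X] [PseudoMetricSpace Y]
    {f : ℝ → X} {G : ℝ → Y} {a b : ℝ}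
    (hG : AbsolutelyContinuousOnInterval G a b)
    (h : ∀ x ∈ uIcc a b, ∀ y ∈ uIcc a b, dist (f x) (f y) ≤ dist (G x) (G y)) :
    AbsolutelyContinuousOnInterval f a b := by
  rw [absolutelyContinuousOnInterval_iff] at hG ⊢
  intro ε hε
  obtain ⟨δ, hδ, H⟩ := hG ε hε
  refine ⟨δ, hδ, fun E hE hlt => lt_of_le_of_lt ?_ (H E hE hlt)⟩
  exact Finset.sum_le_sum fun i hi => h _ (hE.1 i hi).1 _ (hE.1 i hi).2

lemma ac_integral {g : ℝ → ℂ} (hg : IntervalIntegrable g volume 0 1) :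
    AbsolutelyContinuousOnInterval (fun x => ∫ t in (0:ℝ)..x, g t) 0 1 := by
  refine ac_of_dist_le
    (hg.norm.absolutelyContinuousOnInterval_intervalIntegral (c := 0) (by simp)) ?_
  intro x hx y hy
  have h0 : (0:ℝ) ∈ uIcc (0:ℝ) 1 := by simp
  have hgx : IntervalIntegrable g volume 0 x := hg.mono_set (uIcc_subset_uIcc h0 hx)
  have hgy : IntervalIntegrable g volume 0 y := hg.mono_set (uIcc_subset_uIcc h0 hy)
  rw [dist_eq_norm, dist_eq_norm, intervalIntegral.integral_interval_sub_left hgx hgy,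
    intervalIntegral.integral_interval_sub_left hgx.norm hgy.norm, Real.norm_eq_abs]
  exact intervalIntegral.norm_integral_le_abs_integral_norm

/-- `Prim f g`: on `[0,1]` the function `f` is absolutely continuous with a.e. derivative the
integrable function `g`, in the form `f x = f 0 + ∫₀ˣ g`. -/
def Prim (f g : ℝ → ℂ) : Prop :=
  IntervalIntegrable g volume 0 1 ∧ ∀ x ∈ Icc (0:ℝ) 1, f x = f 0 + ∫ t in (0:ℝ)..x, g t

/-- An absolutely continuous function is the integral of its a.e. derivative. -/
lemma prim_of_ac {f g : ℝ → ℂ} (hf : AbsolutelyContinuousOnInterval f 0 1)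
    (hg : IntervalIntegrable g volume 0 1)
    (hd : ∀ᵐ x, x ∈ uIcc (0:ℝ) 1 → HasDerivAt f (g x) x) : Prim f g := by
  refine ⟨hg, ?_⟩
  obtain ⟨C, hC⟩ := (hf.fun_sub (ac_integral hg)).const_of_ae_hasDerivAt_zero (by
    filter_upwards [hd, hg.ae_hasDerivAt_integral] with x h1 h2 hx
    have h3 := (h1 hx).fun_sub (h2 hx 0 (by simp))
    rwa [sub_self] at h3)
  intro x hx
  have h1 := hC x (by simpa [uIcc_of_le] using hx)
  have h0 := hC 0 (by simp)
  simp only [intervalIntegral.integral_same, sub_zero] at h0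
  rw [h0, ← h1]; ring

lemma Prim.ac {f g : ℝ → ℂ} (h : Prim f g) : AbsolutelyContinuousOnInterval f 0 1 := by
  refine ac_of_dist_le (ac_integral h.1) fun x hx y hy => ?_
  rw [uIcc_of_le zero_le_one] at hx hy
  rw [h.2 x hx, h.2 y hy, dist_add_left]

lemma Prim.continuousOn {f g : ℝ → ℂ} (h : Prim f g) : ContinuousOn f (Icc 0 1) := by
  simpa [uIcc_of_le] using h.ac.continuousOn

lemma ae_Ioo : ∀ᵐ x : ℝ, x ∈ uIcc (0:ℝ) 1 → x ∈ Ioo (0:ℝ) 1 := by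
  have h₁ : ∀ᵐ x : ℝ, x ≠ 0 := by simp [ae_iff, measure_singleton]
  have h₂ : ∀ᵐ x : ℝ, x ≠ 1 := by simp [ae_iff, measure_singleton]
  filter_upwards [h₁, h₂] with x h1 h2 hx
  rw [uIcc_of_le zero_le_one] at hx
  exact ⟨lt_of_le_of_ne hx.1 h1.symm, lt_of_le_of_ne hx.2 h2⟩

lemma Prim.ae_hasDerivAt {f g : ℝ → ℂ} (h : Prim f g) :
    ∀ᵐ x, x ∈ uIcc (0:ℝ) 1 → HasDerivAt f (g x) x := by
  filter_upwards [ae_Ioo, h.1.ae_hasDerivAt_integral] with x h1 h2 hx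
  refine ((h2 hx 0 (by simp)).const_add (f 0)).congr_of_eventuallyEq ?_
  filter_upwards [Ioo_mem_nhds (h1 hx).1 (h1 hx).2] with y hy
  exact h.2 y (Ioo_subset_Icc_self hy)

lemma ii_mul {f g : ℝ → ℂ} (hf : ContinuousOn f (Icc 0 1))
    (hg : IntervalIntegrable g volume 0 1) :
    IntervalIntegrable (fun x => f x * g x) volume 0 1 :=
  hg.continuousOn_mul (by simpa [uIcc_of_le] using hf)

lemma Prim.mul {f f' g g' : ℝ → ℂ} (hf : Prim f f') (hg : Prim g g') :
    Prim (fun x => f x * g x) (fun x => f' x * g x + f x * g' x) := by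
  refine prim_of_ac (hf.ac.fun_smul hg.ac) ?_ ?_
  · refine IntervalIntegrable.add ?_ (ii_mul hf.continuousOn hg.1)
    simpa [mul_comm] using ii_mul hg.continuousOn hf.1
  · filter_upwards [hf.ae_hasDerivAt, hg.ae_hasDerivAt] with x h1 h2 hx
    exact (h1 hx).mul (h2 hx)

lemma Prim.sub {f f' g g' : ℝ → ℂ} (hf : Prim f f') (hg : Prim g g') :
    Prim (fun x => f x - g x) (fun x => f' x - g' x) := by
  refine prim_of_ac (hf.ac.fun_sub hg.ac) (hf.1.sub hg.1) ?_
  filter_upwards [hf.ae_hasDerivAt, hg.ae_hasDerivAt] with x h1 h2 hx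
  exact (h1 hx).sub (h2 hx)

lemma Prim.congr {f g g' : ℝ → ℂ} (hf : Prim f g) (h : ∀ x, g x = g' x) : Prim f g' := by
  have : g = g' := funext h
  rwa [← this]

lemma prim_exp (c : ℂ) :
    Prim (fun x : ℝ => Complex.exp (c * x)) (fun x : ℝ => c * Complex.exp (c * x)) := by
  have hd : ∀ x : ℝ, HasDerivAt (fun x : ℝ => Complex.exp (c * x)) (c * Complex.exp (c * x)) x := by
    intro x
    have h1 : HasDerivAt (fun x : ℝ => c * (x : ℂ)) c x := by
      simpa using (Complex.ofRealCLM.hasDerivAt (x := x)).const_mul c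
    simpa [mul_comm] using h1.cexp
  have hc : Continuous (fun x : ℝ => c * Complex.exp (c * x)) := by fun_prop
  refine ⟨hc.intervalIntegrable _ _, fun x _ => ?_⟩
  rw [intervalIntegral.integral_eq_sub_of_hasDerivAt (fun t _ => hd t) (hc.intervalIntegrable _ _)]
  ring

/-- Grönwall's inequality with an integrable coefficient. -/
lemma gronwall_L1 {u k : ℝ → ℝ} {A : ℝ} (hu : ContinuousOn u (Icc 0 1))
    (hA : 0 ≤ A) (hk : IntervalIntegrable k volume 0 1) (hk0 : ∀ x, 0 ≤ k x)
    (h : ∀ x ∈ Icc (0:ℝ) 1, u x ≤ A + ∫ t in (0:ℝ)..x, k t * u t) :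
    ∀ x ∈ Icc (0:ℝ) 1, u x ≤ A * Real.exp (∫ t in (0:ℝ)..1, k t) := by
  have hku : IntervalIntegrable (fun t => k t * u t) volume 0 1 :=
    hk.mul_continuousOn (by simpa [uIcc_of_le] using hu)
  set v : ℝ → ℝ := fun x => A + ∫ t in (0:ℝ)..x, k t * u t with hv
  set K : ℝ → ℝ := fun x => ∫ t in (0:ℝ)..x, k t with hK
  have hKac : AbsolutelyContinuousOnInterval K 0 1 :=
    hk.absolutelyContinuousOnInterval_intervalIntegral (c := 0) (by simp)
  have hvac : AbsolutelyContinuousOnInterval v 0 1 := by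
    refine ac_of_dist_le
      (hku.absolutelyContinuousOnInterval_intervalIntegral (c := 0) (by simp)) ?_
    intro x _ y _
    simp [hv]
  have hKnn : ∀ x ∈ Icc (0:ℝ) 1, 0 ≤ K x := fun x hx =>
    intervalIntegral.integral_nonneg hx.1 fun t _ => hk0 t
  have hEac : AbsolutelyContinuousOnInterval (fun x => Real.exp (-K x)) 0 1 := by
    refine ac_of_dist_le hKac fun x hx y hy => ?_
    rw [uIcc_of_le zero_le_one] at hx hy
    -- `exp` is `1`-Lipschitz on the nonpositive half-line
    have key : ∀ a b : ℝ, a ≤ 0 → b ≤ 0 → Real.exp a - Real.exp b ≤ |a - b| := by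
      intro a b ha hb
      rcases le_total a b with hab | hab
      · have := Real.exp_le_exp.2 hab
        linarith [abs_nonneg (a - b)]
      · have h1 : Real.exp b = Real.exp a * Real.exp (b - a) := by rw [← Real.exp_add]; ring_nf
        have h2 := Real.add_one_le_exp (b - a)
        have h3 : Real.exp a ≤ 1 := Real.exp_le_one_iff.2 ha
        have h4 := Real.exp_pos a
        rw [abs_of_nonneg (sub_nonneg.2 hab), h1]
        nlinarith
    rw [Real.dist_eq, Real.dist_eq, abs_sub_le_iff]
    have hx' := hKnn x hx
    have hy' := hKnn y hy
    constructor
    · refine (key _ _ (by linarith) (by linarith)).trans (le_of_eq ?_)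
      rw [abs_sub_comm]; congr 1; ring
    · refine (key _ _ (by linarith) (by linarith)).trans (le_of_eq ?_)
      congr 1; ring
  intro x hx
  have hsub : uIcc (0:ℝ) x ⊆ uIcc (0:ℝ) 1 := by
    rw [uIcc_of_le hx.1, uIcc_of_le zero_le_one]; exact Icc_subset_Icc_right hx.2
  have hFTC := ((hvac.fun_mul hEac).mono hsub).integral_deriv_eq_sub
  have hneg : ∫ t in (0:ℝ)..x, deriv (fun x => v x * Real.exp (-K x)) t ≤ 0 := by
    have : ∫ t in (0:ℝ)..x, deriv (fun x => v x * Real.exp (-K x)) t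
        = - ∫ t in (0:ℝ)..x, - deriv (fun x => v x * Real.exp (-K x)) t := by simp
    rw [this]
    refine neg_nonpos.2 (intervalIntegral.integral_nonneg_of_ae_restrict hx.1 ?_)
    rw [EventuallyLE, ae_restrict_iff' measurableSet_Icc]
    filter_upwards [hku.ae_hasDerivAt_integral, hk.ae_hasDerivAt_integral] with t h1 h2 ht
    have ht1 : t ∈ Icc (0:ℝ) 1 := ⟨ht.1, ht.2.trans hx.2⟩
    have ht' : t ∈ uIcc (0:ℝ) 1 := by rwa [uIcc_of_le zero_le_one]
    have d1 : HasDerivAt v (k t * u t) t := (h1 ht' 0 (by simp)).const_add A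
    have d2 : HasDerivAt K (k t) t := h2 ht' 0 (by simp)
    have d3 := (d1.mul d2.neg.exp).deriv
    have d4 : deriv (fun x => v x * Real.exp (-K x)) t
      = k t * u t * Real.exp (-K t) + v t * (Real.exp (-K t) * -k t) := d3
    rw [d4]
    have h5 : u t ≤ v t := h t ht1
    have h6 := mul_nonneg (mul_nonneg (hk0 t) (Real.exp_pos (-K t)).le) (sub_nonneg.2 h5)
    show 0 ≤ _
    nlinarith
  have hK0 : K 0 = 0 := by simp [hK]
  have hv0 : v 0 = A := by simp [hv]
  rw [hFTC, hK0, hv0] at hneg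
  simp only [neg_zero, Real.exp_zero, mul_one] at hneg
  have hKx : K x ≤ K 1 := by
    have hk1 : IntervalIntegrable k volume 0 x := hk.mono_set hsub
    have hk2 : IntervalIntegrable k volume x 1 := hk.mono_set (by
      rw [uIcc_of_le hx.2, uIcc_of_le zero_le_one]; exact Icc_subset_Icc_left hx.1)
    have := intervalIntegral.integral_add_adjacent_intervals hk1 hk2
    have h3 : 0 ≤ ∫ t in x..1, k t := intervalIntegral.integral_nonneg hx.2 fun t _ => hk0 t
    simp only [hK]; linarith
  calc u x ≤ v x := h x hx
    _ = (v x * Real.exp (-K x)) * Real.exp (K x) := by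
        rw [mul_assoc, ← Real.exp_add]; simp
    _ ≤ A * Real.exp (K x) := by gcongr; linarith
    _ ≤ A * Real.exp (K 1) := by gcongr

/-! ### The Dirac system: bounds and limits as the imaginary part grows -/

/-- `(y₁, y₂)` solves `y₁' = i a₁ (λ y₁ - q₁ y₂)`, `y₂' = i a₂ (λ y₂ - q₂ y₁)` on `[0,1]`. The
notion is symmetric under exchanging the indices, and no sign is imposed on `a₁`, `a₂`, so that
the upper and the lower half-plane are handled by the same lemmas. -/
structure DSol (a₁ a₂ : ℝ) (q₁ q₂ : ℝ → ℂ) (l : ℂ) (y₁ y₂ : ℝ → ℂ) : Prop where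
  fst : Prim y₁ (fun x => I * a₁ * (l * y₁ x - q₁ x * y₂ x))
  snd : Prim y₂ (fun x => I * a₂ * (l * y₂ x - q₂ x * y₁ x))

lemma DSol.swap {a₁ a₂ : ℝ} {q₁ q₂ : ℝ → ℂ} {l : ℂ} {y₁ y₂ : ℝ → ℂ}
    (h : DSol a₁ a₂ q₁ q₂ l y₁ y₂) : DSol a₂ a₁ q₂ q₁ l y₂ y₁ := ⟨h.snd, h.fst⟩

/-- Removing the free exponential from the first component. -/
lemma DSol.prim_exp_fst {a₁ a₂ : ℝ} {q₁ q₂ : ℝ → ℂ} {l : ℂ} {y₁ y₂ : ℝ → ℂ}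
    (h : DSol a₁ a₂ q₁ q₂ l y₁ y₂) :
    Prim (fun x : ℝ => cexp (-(I * a₁ * l) * x) * y₁ x)
      (fun x : ℝ => -(I * a₁) * (q₁ x * (cexp (-(I * a₁ * l) * x) * y₂ x))) :=
  ((prim_exp (-(I * a₁ * l))).mul h.fst).congr fun x => by ring

lemma norm_exp_aux (a : ℝ) (l : ℂ) (x : ℝ) :
    ‖cexp (-(I * a * l) * x)‖ = Real.exp (a * l.im * x) := by
  rw [Complex.norm_exp]
  congr 1
  simp

lemma ii_sub {E : Type*} [NormedAddCommGroup E] {f : ℝ → E}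
    (hf : IntervalIntegrable f volume 0 1) {x : ℝ} (hx : x ∈ Icc (0:ℝ) 1) :
    IntervalIntegrable f volume 0 x :=
  hf.mono_set (by
    rw [uIcc_of_le hx.1, uIcc_of_le zero_le_one]; exact Icc_subset_Icc_right hx.2)

lemma contOn_exp_mul {c : ℂ} {y : ℝ → ℂ} (hy : ContinuousOn y (Icc 0 1)) :
    ContinuousOn (fun x : ℝ => cexp (c * x) * y x) (Icc 0 1) :=
  (Continuous.continuousOn (by fun_prop)).mul hy

lemma DSol.fst_le {a₁ a₂ : ℝ} {q₁ q₂ : ℝ → ℂ} {l : ℂ} {y₁ y₂ : ℝ → ℂ}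
    (h : DSol a₁ a₂ q₁ q₂ l y₁ y₂) {x : ℝ} (hx : x ∈ Icc (0:ℝ) 1) :
    ‖cexp (-(I * a₁ * l) * x) * y₁ x‖ ≤
      ‖y₁ 0‖ + ∫ t in (0:ℝ)..x, |a₁| * (‖q₁ t‖ * ‖cexp (-(I * a₁ * l) * t) * y₂ t‖) := by
  have h0 := h.prim_exp_fst.2 x hx
  beta_reduce at h0
  rw [h0]
  refine (norm_add_le _ _).trans (add_le_add (by simp) ?_)
  refine (intervalIntegral.norm_integral_le_integral_norm hx.1).trans (le_of_eq ?_)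
  refine intervalIntegral.integral_congr fun t _ => ?_
  simp

/-- Duhamel bound for the second component, normalised by the exponential of the first one. -/
lemma DSol.snd_le {a₁ a₂ : ℝ} {q₁ q₂ : ℝ → ℂ} {l : ℂ} {y₁ y₂ : ℝ → ℂ}
    (h : DSol a₁ a₂ q₁ q₂ l y₁ y₂) {x : ℝ} (hx : x ∈ Icc (0:ℝ) 1) :
    ‖cexp (-(I * a₁ * l) * x) * y₂ x‖ ≤
      Real.exp (-((a₂ - a₁) * l.im * x)) * ‖y₂ 0‖ + ∫ t in (0:ℝ)..x, |a₂| *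
        (‖q₂ t‖ * (Real.exp (-((a₂ - a₁) * l.im * (x - t))) *
          ‖cexp (-(I * a₁ * l) * t) * y₁ t‖)) := by
  have h1 : ‖cexp (-(I * a₁ * l) * x) * y₂ x‖ =
      Real.exp (-((a₂ - a₁) * l.im * x)) * ‖cexp (-(I * a₂ * l) * x) * y₂ x‖ := by
    rw [norm_mul, norm_mul, norm_exp_aux, norm_exp_aux, ← mul_assoc, ← Real.exp_add]
    ring_nf
  have h2 := h.swap.fst_le hx
  rw [h1]
  refine (mul_le_mul_of_nonneg_left h2 (Real.exp_pos _).le).trans (le_of_eq ?_)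
  rw [mul_add, ← intervalIntegral.integral_const_mul]
  congr 1
  refine intervalIntegral.integral_congr fun t _ => ?_
  simp only [norm_mul, norm_exp_aux]
  have h3 : Real.exp (-((a₂ - a₁) * l.im * x)) * Real.exp (a₂ * l.im * t)
      = Real.exp (-((a₂ - a₁) * l.im * (x - t))) * Real.exp (a₁ * l.im * t) := by
    rw [← Real.exp_add, ← Real.exp_add]; ring_nf
  linear_combination (|a₂| * ‖q₂ t‖ * ‖y₁ t‖) * h3

/-- The constant of the uniform bound on solutions. -/
def bigK (a₁ a₂ : ℝ) (q₁ q₂ : ℝ → ℂ) : ℝ :=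
  Real.exp (∫ t in (0:ℝ)..1, (|a₁| * ‖q₁ t‖ + |a₂| * ‖q₂ t‖))

/-- Solutions, normalised by the dominant free exponential, are bounded uniformly in `λ`. -/
lemma DSol.bound {a₁ a₂ : ℝ} {q₁ q₂ : ℝ → ℂ} {l : ℂ} {y₁ y₂ : ℝ → ℂ}
    (hq₁ : IntervalIntegrable q₁ volume 0 1) (hq₂ : IntervalIntegrable q₂ volume 0 1)
    (h : DSol a₁ a₂ q₁ q₂ l y₁ y₂) (hl : 0 ≤ (a₂ - a₁) * l.im) {x : ℝ} (hx : x ∈ Icc (0:ℝ) 1) :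
    ‖cexp (-(I * a₁ * l) * x) * y₁ x‖ + ‖cexp (-(I * a₁ * l) * x) * y₂ x‖ ≤
      (‖y₁ 0‖ + ‖y₂ 0‖) * bigK a₁ a₂ q₁ q₂ := by
  have c1 : ContinuousOn (fun t : ℝ => ‖cexp (-(I * a₁ * l) * t) * y₁ t‖) (Icc 0 1) :=
    (contOn_exp_mul h.fst.continuousOn).norm
  have c2 : ContinuousOn (fun t : ℝ => ‖cexp (-(I * a₁ * l) * t) * y₂ t‖) (Icc 0 1) :=
    (contOn_exp_mul h.snd.continuousOn).norm
  have hk : IntervalIntegrable (fun t => |a₁| * ‖q₁ t‖ + |a₂| * ‖q₂ t‖) volume 0 1 :=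
    (hq₁.norm.const_mul _).add (hq₂.norm.const_mul _)
  refine gronwall_L1
    (u := fun t : ℝ => ‖cexp (-(I * a₁ * l) * t) * y₁ t‖ + ‖cexp (-(I * a₁ * l) * t) * y₂ t‖)
    (c1.add c2) (by positivity) hk (fun t => by positivity) ?_ x hx
  intro s hs
  have hC : uIcc (0:ℝ) s ⊆ Icc 0 1 := by
    rw [uIcc_of_le hs.1]; exact Icc_subset_Icc_right hs.2
  have i1 : IntervalIntegrable
      (fun t : ℝ => |a₁| * (‖q₁ t‖ * ‖cexp (-(I * a₁ * l) * t) * y₂ t‖)) volume 0 s :=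
    ((ii_sub hq₁ hs).norm.mul_continuousOn (c2.mono hC)).const_mul _
  have i2 : IntervalIntegrable
      (fun t : ℝ => |a₂| * (‖q₂ t‖ * ‖cexp (-(I * a₁ * l) * t) * y₁ t‖)) volume 0 s :=
    ((ii_sub hq₂ hs).norm.mul_continuousOn (c1.mono hC)).const_mul _
  have i3 : IntervalIntegrable
      (fun t : ℝ => |a₂| * (‖q₂ t‖ * (Real.exp (-((a₂ - a₁) * l.im * (s - t))) *
        ‖cexp (-(I * a₁ * l) * t) * y₁ t‖))) volume 0 s :=
    ((ii_sub hq₂ hs).norm.mul_continuousOn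
      ((Continuous.continuousOn (by fun_prop)).mul (c1.mono hC))).const_mul _
  have i4 : IntervalIntegrable (fun t : ℝ => (|a₁| * ‖q₁ t‖ + |a₂| * ‖q₂ t‖) *
      (‖cexp (-(I * a₁ * l) * t) * y₁ t‖ + ‖cexp (-(I * a₁ * l) * t) * y₂ t‖)) volume 0 s :=
    (ii_sub hk hs).mul_continuousOn ((c1.add c2).mono hC)
  have b1 := h.fst_le hs
  have b2 := h.snd_le hs
  have b3 : Real.exp (-((a₂ - a₁) * l.im * s)) * ‖y₂ 0‖ ≤ ‖y₂ 0‖ := by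
    refine mul_le_of_le_one_left (norm_nonneg _) (Real.exp_le_one_iff.2 ?_)
    have := mul_nonneg hl hs.1
    linarith
  have b4 : (∫ t in (0:ℝ)..s, |a₁| * (‖q₁ t‖ * ‖cexp (-(I * a₁ * l) * t) * y₂ t‖)) +
      (∫ t in (0:ℝ)..s, |a₂| * (‖q₂ t‖ * (Real.exp (-((a₂ - a₁) * l.im * (s - t))) *
        ‖cexp (-(I * a₁ * l) * t) * y₁ t‖))) ≤
      ∫ t in (0:ℝ)..s, (|a₁| * ‖q₁ t‖ + |a₂| * ‖q₂ t‖) *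
      (‖cexp (-(I * a₁ * l) * t) * y₁ t‖ + ‖cexp (-(I * a₁ * l) * t) * y₂ t‖) := by
    rw [← intervalIntegral.integral_add i1 i3]
    refine intervalIntegral.integral_mono_on hs.1 (i1.add i3) i4 fun t ht => ?_
    have e1 : Real.exp (-((a₂ - a₁) * l.im * (s - t))) ≤ 1 := by
      refine Real.exp_le_one_iff.2 ?_
      have := mul_nonneg hl (sub_nonneg.2 ht.2)
      linarith
    set A := ‖cexp (-(I * a₁ * l) * t) * y₁ t‖
    set B := ‖cexp (-(I * a₁ * l) * t) * y₂ t‖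
    have hA : 0 ≤ A := norm_nonneg _
    have hB : 0 ≤ B := norm_nonneg _
    have e2 : |a₂| * (‖q₂ t‖ * (Real.exp (-((a₂ - a₁) * l.im * (s - t))) * A)) ≤
        |a₂| * (‖q₂ t‖ * A) := by
      gcongr
      exact mul_le_of_le_one_left hA e1
    have e3 : 0 ≤ |a₁| * ‖q₁ t‖ * A := by positivity
    have e4 : 0 ≤ |a₂| * ‖q₂ t‖ * B := by positivity
    nlinarith
  linarith

lemma exp_neg_mul_tendsto {x : ℝ} (hx : 0 < x) :
    Tendsto (fun s : ℝ => Real.exp (-(s * x))) atTop (𝓝 0) :=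
  Real.tendsto_exp_neg_atTop_nhds_zero.comp (tendsto_id.atTop_mul_const hx)

/-- The exponentially weighted `L¹` norm of `q` tends to `0`. -/
lemma weighted_tendsto {q : ℝ → ℂ} (hq : IntervalIntegrable q volume 0 1) {x : ℝ}
    (hx : x ∈ Icc (0:ℝ) 1) :
    Tendsto (fun s : ℝ => ∫ t in (0:ℝ)..x, ‖q t‖ * Real.exp (-(s * (x - t)))) atTop (𝓝 0) := by
  have hqx := ii_sub hq hx
  suffices H : Tendsto (fun s : ℝ => ∫ t in (0:ℝ)..x, ‖q t‖ * Real.exp (-(s * (x - t)))) atTop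
      (𝓝 (∫ t in (0:ℝ)..x, (0:ℝ))) by simpa using H
  refine intervalIntegral.tendsto_integral_filter_of_dominated_convergence (fun t => ‖q t‖)
    ?_ ?_ hqx.norm ?_
  · filter_upwards with s
    exact (hqx.norm.mul_continuousOn
      (Continuous.continuousOn (by fun_prop))).def'.aestronglyMeasurable
  · filter_upwards [eventually_ge_atTop (0:ℝ)] with s hs
    filter_upwards with t ht
    rw [uIoc_of_le hx.1] at ht
    rw [norm_mul, norm_norm, Real.norm_eq_abs, Real.abs_exp]
    refine mul_le_of_le_one_right (norm_nonneg _) (Real.exp_le_one_iff.2 ?_)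
    have := mul_nonneg hs (sub_nonneg.2 ht.2)
    linarith
  · have h₂ : ∀ᵐ t : ℝ, t ≠ x := by simp [ae_iff, measure_singleton]
    filter_upwards [h₂] with t ht ht'
    rw [uIoc_of_le hx.1] at ht'
    have := (exp_neg_mul_tendsto (sub_pos.2 (lt_of_le_of_ne ht'.2 ht))).const_mul ‖q t‖
    simpa using this

/-- Limits of a family of solutions with fixed initial data along `(a₂ - a₁) Im λ → +∞`,
where the first free exponential dominates. -/
lemma DSol.limits {a₁ a₂ : ℝ} {q₁ q₂ : ℝ → ℂ} {Y₁ Y₂ : ℂ → ℝ → ℂ} {c₁ c₂ : ℂ}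
    (hq₁ : IntervalIntegrable q₁ volume 0 1) (hq₂ : IntervalIntegrable q₂ volume 0 1)
    (h : ∀ l, DSol a₁ a₂ q₁ q₂ l (Y₁ l) (Y₂ l)) (h1 : ∀ l, Y₁ l 0 = c₁) (h2 : ∀ l, Y₂ l 0 = c₂) :
    Tendsto (fun l => cexp (-(I * a₁ * l)) * Y₁ l 1)
      (comap (fun l : ℂ => (a₂ - a₁) * l.im) atTop) (𝓝 c₁) ∧
    Tendsto (fun l => cexp (-(I * a₁ * l)) * Y₂ l 1)
      (comap (fun l : ℂ => (a₂ - a₁) * l.im) atTop) (𝓝 0) := by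
  set F : Filter ℂ := comap (fun l : ℂ => (a₂ - a₁) * l.im) atTop with hF
  have hFt : Tendsto (fun l : ℂ => (a₂ - a₁) * l.im) F atTop := tendsto_comap
  have hpos : ∀ᶠ l in F, 0 ≤ (a₂ - a₁) * l.im := hFt.eventually (eventually_ge_atTop 0)
  set C := (‖c₁‖ + ‖c₂‖) * bigK a₁ a₂ q₁ q₂ with hC
  have hbd : ∀ l : ℂ, 0 ≤ (a₂ - a₁) * l.im → ∀ x ∈ Icc (0:ℝ) 1,
      ‖cexp (-(I * a₁ * l) * x) * Y₁ l x‖ ≤ C ∧ ‖cexp (-(I * a₁ * l) * x) * Y₂ l x‖ ≤ C := by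
    intro l hl x hx
    have := (h l).bound hq₁ hq₂ hl hx
    rw [h1, h2] at this
    constructor <;>
    linarith [norm_nonneg (cexp (-(I * a₁ * l) * x) * Y₁ l x),
      norm_nonneg (cexp (-(I * a₁ * l) * x) * Y₂ l x)]
  have hz2 : ∀ x ∈ Icc (0:ℝ) 1, 0 < x →
      Tendsto (fun l : ℂ => cexp (-(I * a₁ * l) * x) * Y₂ l x) F (𝓝 0) := by
    intro x hx hx0
    have hmaj : Tendsto (fun l : ℂ => Real.exp (-((a₂ - a₁) * l.im * x)) * ‖c₂‖ +
        |a₂| * C * ∫ t in (0:ℝ)..x, ‖q₂ t‖ * Real.exp (-((a₂ - a₁) * l.im * (x - t))))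
        F (𝓝 0) := by
      have t1 := ((exp_neg_mul_tendsto hx0).comp hFt).mul_const ‖c₂‖
      have t2 := ((weighted_tendsto hq₂ hx).comp hFt).const_mul (|a₂| * C)
      simpa [Function.comp_def] using t1.add t2
    refine squeeze_zero_norm' ?_ hmaj
    filter_upwards [hpos] with l hl
    have b := (h l).snd_le hx
    rw [h2] at b
    refine b.trans (add_le_add le_rfl ?_)
    rw [← intervalIntegral.integral_const_mul]
    have hCs : uIcc (0:ℝ) x ⊆ Icc 0 1 := by
      rw [uIcc_of_le hx.1]; exact Icc_subset_Icc_right hx.2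
    refine intervalIntegral.integral_mono_on hx.1 ?_ ?_ fun t ht => ?_
    · exact ((ii_sub hq₂ hx).norm.mul_continuousOn
        ((Continuous.continuousOn (by fun_prop)).mul
          (((contOn_exp_mul (h l).fst.continuousOn).norm).mono hCs))).const_mul _
    · exact ((ii_sub hq₂ hx).norm.mul_continuousOn
        (Continuous.continuousOn (by fun_prop))).const_mul _
    · have hb := (hbd l hl t ⟨ht.1, ht.2.trans hx.2⟩).1
      calc _ ≤ |a₂| * (‖q₂ t‖ * (Real.exp (-((a₂ - a₁) * l.im * (x - t))) * C)) := by gcongr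
        _ = _ := by ring
  have h11 : (1:ℝ) ∈ Icc (0:ℝ) 1 := by simp
  constructor
  · have hint : Tendsto (fun l : ℂ => ∫ t in (0:ℝ)..1,
        -(I * a₁) * (q₁ t * (cexp (-(I * a₁ * l) * t) * Y₂ l t))) F
        (𝓝 (∫ t in (0:ℝ)..1, (0:ℂ))) := by
      refine intervalIntegral.tendsto_integral_filter_of_dominated_convergence
        (fun t => |a₁| * (‖q₁ t‖ * C)) ?_ ?_ ((hq₁.norm.mul_const _).const_mul _) ?_
      · filter_upwards with l
        exact (h l).prim_exp_fst.1.def'.aestronglyMeasurable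
      · filter_upwards [hpos] with l hl
        filter_upwards with t ht
        rw [uIoc_of_le zero_le_one] at ht
        have hb := (hbd l hl t ⟨ht.1.le, ht.2⟩).2
        rw [norm_mul, norm_mul _ (cexp _ * _)]
        have : ‖-(I * (a₁:ℂ))‖ = |a₁| := by simp
        rw [this]
        gcongr
      · filter_upwards with t ht
        rw [uIoc_of_le zero_le_one] at ht
        have := ((hz2 t ⟨ht.1.le, ht.2⟩ ht.1).const_mul (q₁ t)).const_mul (-(I * (a₁:ℂ)))
        simpa using this
    have h3 := hint.const_add c₁
    simp only [intervalIntegral.integral_zero, add_zero] at h3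
    refine h3.congr fun l => ?_
    have h4 := (h l).prim_exp_fst.2 1 h11
    simp only [ofReal_one, mul_one, ofReal_zero, mul_zero, Complex.exp_zero, one_mul, h1] at h4
    rw [h4]
  · have := hz2 1 h11 one_pos
    simpa using this

/-- A bound on solutions valid for all `λ`. -/
lemma DSol.bound_all {a₁ a₂ : ℝ} {q₁ q₂ : ℝ → ℂ} {l : ℂ} {y₁ y₂ : ℝ → ℂ} (ha : a₁ < a₂)
    (hq₁ : IntervalIntegrable q₁ volume 0 1) (hq₂ : IntervalIntegrable q₂ volume 0 1)
    (h : DSol a₁ a₂ q₁ q₂ l y₁ y₂) {x : ℝ} (hx : x ∈ Icc (0:ℝ) 1) :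
    ‖y₁ x‖ + ‖y₂ x‖ ≤ (‖y₁ 0‖ + ‖y₂ 0‖) * (bigK a₁ a₂ q₁ q₂ + bigK a₂ a₁ q₂ q₁) *
      (Real.exp (-a₁ * l.im * x) + Real.exp (-a₂ * l.im * x)) := by
  have k1 : 0 < bigK a₁ a₂ q₁ q₂ := Real.exp_pos _
  have k2 : 0 < bigK a₂ a₁ q₂ q₁ := Real.exp_pos _
  have key : ∀ (a A K K' e : ℝ), 0 ≤ A → 0 ≤ K → 0 ≤ K' → 0 ≤ e →
      Real.exp (a * l.im * x) * ‖y₁ x‖ + Real.exp (a * l.im * x) * ‖y₂ x‖ ≤ A * K →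
      ‖y₁ x‖ + ‖y₂ x‖ ≤ A * (K + K') * (Real.exp (-a * l.im * x) + e) := by
    intro a A K K' e hA hK hK' he hb
    have h1 : ‖y₁ x‖ + ‖y₂ x‖ = Real.exp (-a * l.im * x) *
        (Real.exp (a * l.im * x) * ‖y₁ x‖ + Real.exp (a * l.im * x) * ‖y₂ x‖) := by
      rw [← mul_add, ← mul_assoc, ← Real.exp_add]; ring_nf; simp
    rw [h1]
    calc _ ≤ Real.exp (-a * l.im * x) * (A * K) := by gcongr
      _ ≤ (Real.exp (-a * l.im * x) + e) * (A * (K + K')) := by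
          gcongr
          · linarith
          · linarith
      _ = _ := by ring
  rcases le_total 0 l.im with hl | hl
  · have hb := h.bound hq₁ hq₂ (mul_nonneg (sub_pos.2 ha).le hl) hx
    rw [norm_mul, norm_mul, norm_exp_aux] at hb
    exact key _ _ _ _ _ (by positivity) k1.le k2.le (Real.exp_pos _).le hb
  · have hb := h.swap.bound hq₂ hq₁
      (mul_nonneg_of_nonpos_of_nonpos (sub_neg.2 ha).le hl) hx
    rw [norm_mul, norm_mul, norm_exp_aux, add_comm, add_comm ‖y₂ 0‖] at hb
    rw [add_comm (bigK a₁ a₂ q₁ q₂), add_comm (Real.exp (-a₁ * l.im * x))]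
    exact key _ _ _ _ _ (by positivity) k2.le k1.le (Real.exp_pos _).le hb

/-! ### Wronskians and analyticity in the spectral parameter -/

/-- The derivative of the normalised Wronskian of solutions at two spectral parameters `l`, `m`.
For `m = l` this is Liouville's formula. -/
lemma DSol.wronskian {a₁ a₂ : ℝ} {q₁ q₂ : ℝ → ℂ} {l m : ℂ} {u₁ u₂ w₁ w₂ : ℝ → ℂ}
    (hu : DSol a₁ a₂ q₁ q₂ l u₁ u₂) (hw : DSol a₁ a₂ q₁ q₂ m w₁ w₂) :
    Prim (fun x : ℝ => cexp (-(I * (a₁ + a₂) * l) * x) * (u₁ x * w₂ x - u₂ x * w₁ x))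
      (fun x : ℝ => (m - l) * (I * (cexp (-(I * (a₁ + a₂) * l) * x) *
        (a₂ * u₁ x * w₂ x - a₁ * u₂ x * w₁ x)))) :=
  ((prim_exp (-(I * (a₁ + a₂) * l))).mul ((hu.fst.mul hw.snd).sub (hu.snd.mul hw.fst))).congr
    fun x => by ring

lemma DSol.wronskian_bound {a₁ a₂ : ℝ} {q₁ q₂ : ℝ → ℂ} {l : ℂ} {u₁ u₂ : ℝ → ℂ}
    (hu : DSol a₁ a₂ q₁ q₂ l u₁ u₂) :
    ∃ D : ℝ, ∀ t ∈ Icc (0:ℝ) 1, ∀ w₁ w₂ : ℂ, ∀ B : ℝ, ‖w₁‖ ≤ B → ‖w₂‖ ≤ B →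
      ‖I * (cexp (-(I * (a₁ + a₂) * l) * t) * (a₂ * u₁ t * w₂ - a₁ * u₂ t * w₁))‖ ≤ D * B := by
  have c1 : ContinuousOn (fun t : ℝ => cexp (-(I * (a₁ + a₂) * l) * t) * (a₂ * u₁ t))
      (Icc 0 1) := contOn_exp_mul (continuousOn_const.mul hu.fst.continuousOn)
  have c2 : ContinuousOn (fun t : ℝ => cexp (-(I * (a₁ + a₂) * l) * t) * (a₁ * u₂ t))
      (Icc 0 1) := contOn_exp_mul (continuousOn_const.mul hu.snd.continuousOn)
  obtain ⟨D1, h1⟩ := isCompact_Icc.exists_bound_of_continuousOn c1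
  obtain ⟨D2, h2⟩ := isCompact_Icc.exists_bound_of_continuousOn c2
  refine ⟨D1 + D2, fun t ht w₁ w₂ B hw1 hw2 => ?_⟩
  have h3 := h1 t ht
  have h4 := h2 t ht
  have e : I * (cexp (-(I * (a₁ + a₂) * l) * t) * (a₂ * u₁ t * w₂ - a₁ * u₂ t * w₁)) =
      I * (cexp (-(I * (a₁ + a₂) * l) * t) * (a₂ * u₁ t) * w₂ -
        cexp (-(I * (a₁ + a₂) * l) * t) * (a₁ * u₂ t) * w₁) := by ring
  rw [e, norm_mul, norm_I, one_mul]
  refine (norm_sub_le _ _).trans ?_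
  rw [norm_mul _ w₂, norm_mul _ w₁, add_mul]
  have hB : 0 ≤ B := (norm_nonneg _).trans hw1
  exact add_le_add (mul_le_mul h3 hw2 (norm_nonneg _) ((norm_nonneg _).trans h3))
    (mul_le_mul h4 hw1 (norm_nonneg _) ((norm_nonneg _).trans h4))

/-- Continuity in the parameter `m`, at `m = l`, of the normalised Wronskian of a fixed solution at `l`
with a locally bounded family of solutions having common initial data. -/
lemma DSol.wronskian_cont {a₁ a₂ : ℝ} {q₁ q₂ : ℝ → ℂ} {l : ℂ} {u₁ u₂ : ℝ → ℂ}
    {Y₁ Y₂ : ℂ → ℝ → ℂ} {c₁ c₂ : ℂ} {B : ℝ}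
    (hu : DSol a₁ a₂ q₁ q₂ l u₁ u₂)
    (h : ∀ m, DSol a₁ a₂ q₁ q₂ m (Y₁ m) (Y₂ m)) (h1 : ∀ m, Y₁ m 0 = c₁) (h2 : ∀ m, Y₂ m 0 = c₂)
    (hB : ∀ᶠ m in 𝓝 l, ∀ x ∈ Icc (0:ℝ) 1, ‖Y₁ m x‖ ≤ B ∧ ‖Y₂ m x‖ ≤ B)
    {x : ℝ} (hx : x ∈ Icc (0:ℝ) 1) :
    Tendsto (fun m => cexp (-(I * (a₁ + a₂) * l) * x) * (u₁ x * Y₂ m x - u₂ x * Y₁ m x)) (𝓝 l)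
      (𝓝 (cexp (-(I * (a₁ + a₂) * l) * x) * (u₁ x * Y₂ l x - u₂ x * Y₁ l x))) := by
  obtain ⟨D, hD⟩ := hu.wronskian_bound
  have e0 : ∀ m, cexp (-(I * (a₁ + a₂) * l) * x) * (u₁ x * Y₂ m x - u₂ x * Y₁ m x) =
      (u₁ 0 * c₂ - u₂ 0 * c₁) + ∫ t in (0:ℝ)..x, (m - l) * (I * (cexp (-(I * (a₁ + a₂) * l) * t) *
        (a₂ * u₁ t * Y₂ m t - a₁ * u₂ t * Y₁ m t))) := by
    intro m
    have := (hu.wronskian (h m)).2 x hx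
    beta_reduce at this
    rw [this, h1, h2]
    simp
  have el := e0 l
  simp only [sub_self, zero_mul, intervalIntegral.integral_zero, add_zero] at el
  rw [el]
  simp_rw [e0]
  suffices H : Tendsto (fun m => ∫ t in (0:ℝ)..x, (m - l) * (I *
      (cexp (-(I * (a₁ + a₂) * l) * t) * (a₂ * u₁ t * Y₂ m t - a₁ * u₂ t * Y₁ m t)))) (𝓝 l)
      (𝓝 0) by simpa using H.const_add (u₁ 0 * c₂ - u₂ 0 * c₁)
  have hmaj : Tendsto (fun m : ℂ => ‖m - l‖ * (D * B) * |x - 0|) (𝓝 l) (𝓝 0) := by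
    have : Continuous (fun m : ℂ => ‖m - l‖ * (D * B) * |x - 0|) := by fun_prop
    simpa using this.tendsto l
  refine squeeze_zero_norm' ?_ hmaj
  filter_upwards [hB] with m hm
  refine intervalIntegral.norm_integral_le_of_norm_le_const fun t ht => ?_
  rw [uIoc_of_le hx.1] at ht
  have ht' : t ∈ Icc (0:ℝ) 1 := ⟨ht.1.le, ht.2.trans hx.2⟩
  rw [norm_mul]
  gcongr
  exact hD t ht' _ _ B (hm t ht').1 (hm t ht').2

/-- Differentiability in the parameter `m`, at `m = l`: the difference quotient of the Wronskian is an
integral converging by dominated convergence. -/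
lemma DSol.wronskian_diff {a₁ a₂ : ℝ} {q₁ q₂ : ℝ → ℂ} {l : ℂ} {u₁ u₂ : ℝ → ℂ}
    {Y₁ Y₂ : ℂ → ℝ → ℂ} {c₁ c₂ : ℂ} {B : ℝ}
    (hu : DSol a₁ a₂ q₁ q₂ l u₁ u₂)
    (h : ∀ m, DSol a₁ a₂ q₁ q₂ m (Y₁ m) (Y₂ m)) (h1 : ∀ m, Y₁ m 0 = c₁) (h2 : ∀ m, Y₂ m 0 = c₂)
    (hB : ∀ᶠ m in 𝓝 l, ∀ x ∈ Icc (0:ℝ) 1, ‖Y₁ m x‖ ≤ B ∧ ‖Y₂ m x‖ ≤ B)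
    (hc : ∀ x ∈ Icc (0:ℝ) 1, Tendsto (fun m => Y₁ m x) (𝓝 l) (𝓝 (Y₁ l x)) ∧
      Tendsto (fun m => Y₂ m x) (𝓝 l) (𝓝 (Y₂ l x))) :
    DifferentiableAt ℂ (fun m => cexp (-(I * (a₁ + a₂) * l) * (1:ℝ)) *
      (u₁ 1 * Y₂ m 1 - u₂ 1 * Y₁ m 1)) l := by
  obtain ⟨D, hD⟩ := hu.wronskian_bound
  set G : ℂ → ℂ := fun m => ∫ t in (0:ℝ)..1, I * (cexp (-(I * (a₁ + a₂) * l) * t) *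
        (a₂ * u₁ t * Y₂ m t - a₁ * u₂ t * Y₁ m t)) with hG
  have hGc : Tendsto G (𝓝 l) (𝓝 (G l)) := by
    refine intervalIntegral.tendsto_integral_filter_of_dominated_convergence
      (fun _ => D * B) ?_ ?_ intervalIntegrable_const ?_
    · filter_upwards with m
      have : ContinuousOn (fun t : ℝ => I * (cexp (-(I * (a₁ + a₂) * l) * t) *
        (a₂ * u₁ t * Y₂ m t - a₁ * u₂ t * Y₁ m t))) (Icc 0 1) :=
        continuousOn_const.mul (contOn_exp_mul
          (((continuousOn_const.mul hu.fst.continuousOn).mul (h m).snd.continuousOn).sub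
          ((continuousOn_const.mul hu.snd.continuousOn).mul (h m).fst.continuousOn)))
      rw [uIoc_of_le zero_le_one]
      exact (this.mono Ioc_subset_Icc_self).aestronglyMeasurable measurableSet_Ioc
    · filter_upwards [hB] with m hm
      filter_upwards with t ht
      rw [uIoc_of_le zero_le_one] at ht
      have ht' : t ∈ Icc (0:ℝ) 1 := ⟨ht.1.le, ht.2⟩
      exact hD t ht' _ _ B (hm t ht').1 (hm t ht').2
    · filter_upwards with t ht
      rw [uIoc_of_le zero_le_one] at ht
      have ht' : t ∈ Icc (0:ℝ) 1 := ⟨ht.1.le, ht.2⟩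
      exact ((((hc t ht').2.const_mul _).sub ((hc t ht').1.const_mul _)).const_mul _).const_mul _
  have e0 : ∀ m, cexp (-(I * (a₁ + a₂) * l) * (1:ℝ)) * (u₁ 1 * Y₂ m 1 - u₂ 1 * Y₁ m 1) =
      (u₁ 0 * c₂ - u₂ 0 * c₁) + (m - l) * G m := by
    intro m
    have := (hu.wronskian (h m)).2 1 (by simp)
    beta_reduce at this
    rw [this, h1, h2, intervalIntegral.integral_const_mul]
    simp only [ofReal_zero, mul_zero, Complex.exp_zero, one_mul, hG]
  simp_rw [e0]
  refine (HasDerivAt.const_add _ (f' := G l) ?_).differentiableAt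
  rw [hasDerivAt_iff_tendsto_slope]
  refine (hGc.mono_left nhdsWithin_le_nhds).congr' ?_
  filter_upwards [self_mem_nhdsWithin] with m hm
  have : m - l ≠ 0 := sub_ne_zero.2 hm
  rw [slope_def_field]
  field_simp
  simp

section Fundamental

variable {b₁ b₂ : ℝ} {Q₁₂ Q₂₁ : ℝ → ℂ} {Φ : ℂ → ℝ → Fin 2 → Fin 2 → ℂ}

lemma prim_congr_ae {f g g' : ℝ → ℂ} (hf : Prim f g)
    (h : ∀ᵐ x ∂(volume.restrict (Icc (0:ℝ) 1)), g x = g' x) : Prim f g' := by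
  rw [ae_restrict_iff' measurableSet_Icc] at h
  refine ⟨hf.1.congr_ae ?_, fun x hx => ?_⟩
  · rw [EventuallyEq, ae_restrict_iff' measurableSet_uIoc, uIoc_of_le zero_le_one]
    filter_upwards [h] with t ht h1 using ht (Ioc_subset_Icc_self h1)
  · rw [hf.2 x hx]
    congr 1
    refine intervalIntegral.integral_congr_ae ?_
    filter_upwards [h] with t ht h1
    rw [uIoc_of_le hx.1] at h1
    exact ht ⟨h1.1.le, h1.2.trans hx.2⟩

lemma IsFundSol.dsol (hb₁ : b₁ < 0) (hb₂ : 0 < b₂) (hΦ : IsFundSol b₁ b₂ Q₁₂ Q₂₁ Φ)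
    (l : ℂ) (k : Fin 2) :
    DSol b₁ b₂ Q₁₂ Q₂₁ l (fun x => Φ l x 0 k) (fun x => Φ l x 1 k) := by
  obtain ⟨g, hg, hy, hae⟩ := (hΦ l).2 k
  have hp : ∀ i, Prim (fun x => Φ l x i k) (fun x => g x i) := fun i =>
    ⟨(intervalIntegrable_iff_integrableOn_Icc_of_le zero_le_one).2 (hg i),
      fun x hx => hy x hx i⟩
  have h1 : (b₁ : ℂ) ≠ 0 := by exact_mod_cast hb₁.ne
  have h2 : (b₂ : ℂ) ≠ 0 := by exact_mod_cast hb₂.ne'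
  refine ⟨prim_congr_ae (hp 0) ?_, prim_congr_ae (hp 1) ?_⟩
  · filter_upwards [hae] with x hx
    rw [← hx.1]
    field_simp
    linear_combination (g x 0) * I_sq
  · filter_upwards [hae] with x hx
    rw [← hx.2]
    field_simp
    linear_combination (g x 1) * I_sq

lemma IsFundSol.norm_le (hb₁ : b₁ < 0) (hb₂ : 0 < b₂) (hΦ : IsFundSol b₁ b₂ Q₁₂ Q₂₁ Φ)
    (hq₁ : IntervalIntegrable Q₁₂ volume 0 1) (hq₂ : IntervalIntegrable Q₂₁ volume 0 1) :
    ∃ K : ℝ, 0 < K ∧ ∀ l : ℂ, ∀ x ∈ Icc (0:ℝ) 1, ∀ j k,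
      ‖Φ l x j k‖ ≤ K * (Real.exp (-b₁ * l.im * x) + Real.exp (-b₂ * l.im * x)) := by
  refine ⟨bigK b₁ b₂ Q₁₂ Q₂₁ + bigK b₂ b₁ Q₂₁ Q₁₂,
    add_pos (Real.exp_pos _) (Real.exp_pos _), fun l x hx j k => ?_⟩
  have hb := (hΦ.dsol hb₁ hb₂ l k).bound_all (hb₁.trans hb₂) hq₁ hq₂ hx
  have h0 := (hΦ l).1
  have : ‖Φ l 0 0 k‖ + ‖Φ l 0 1 k‖ = 1 := by
    rw [h0, h0]; fin_cases k <;> simp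
  rw [this, one_mul] at hb
  refine le_trans ?_ hb
  fin_cases j <;> simp

/-- Liouville's formula. -/
lemma IsFundSol.det (hb₁ : b₁ < 0) (hb₂ : 0 < b₂) (hΦ : IsFundSol b₁ b₂ Q₁₂ Q₂₁ Φ) (l : ℂ)
    {x : ℝ} (hx : x ∈ Icc (0:ℝ) 1) :
    cexp (-(I * (b₁ + b₂) * l) * x) *
      (Φ l x 0 0 * Φ l x 1 1 - Φ l x 1 0 * Φ l x 0 1) = 1 := by
  have := ((hΦ.dsol hb₁ hb₂ l 0).wronskian (hΦ.dsol hb₁ hb₂ l 1)).2 x hx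
  beta_reduce at this
  rw [this]
  simp [(hΦ l).1]

/-- The fundamental solution at `x = 1` is entire in `λ`: variation of the spectral parameter
expresses it through Wronskians with the solutions at a fixed parameter. -/
lemma IsFundSol.entire (hb₁ : b₁ < 0) (hb₂ : 0 < b₂) (hΦ : IsFundSol b₁ b₂ Q₁₂ Q₂₁ Φ)
    (hq₁ : IntervalIntegrable Q₁₂ volume 0 1) (hq₂ : IntervalIntegrable Q₂₁ volume 0 1)
    (j k : Fin 2) : Differentiable ℂ (fun l => Φ l 1 j k) := by
  intro l
  obtain ⟨K, hK, hbd⟩ := hΦ.norm_le hb₁ hb₂ hq₁ hq₂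
  set R : ℝ := |l.im| + 1
  set B : ℝ := K * (Real.exp (-b₁ * R) + Real.exp (b₂ * R))
  have hB : ∀ᶠ m in 𝓝 l, ∀ x ∈ Icc (0:ℝ) 1, ‖Φ m x 0 k‖ ≤ B ∧ ‖Φ m x 1 k‖ ≤ B := by
    have hcont : ∀ᶠ m : ℂ in 𝓝 l, |m.im| < R := by
      have : Continuous (fun m : ℂ => |m.im|) := by fun_prop
      exact this.tendsto l (Iio_mem_nhds (by simp [R]))
    filter_upwards [hcont] with m hm x hx
    have hm' : |m.im * x| ≤ R := by
      rw [abs_mul, abs_of_nonneg hx.1]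
      have h1 := mul_le_mul hm.le hx.2 hx.1 ((abs_nonneg _).trans hm.le)
      linarith
    have hle : K * (Real.exp (-b₁ * m.im * x) + Real.exp (-b₂ * m.im * x)) ≤ B := by
      have h1 := abs_le.1 hm'
      have e1 : -b₁ * m.im * x ≤ -b₁ * R := by
        rw [mul_assoc]; exact mul_le_mul_of_nonneg_left h1.2 (by linarith)
      have e2 : -b₂ * m.im * x ≤ b₂ * R := by nlinarith [h1.1]
      exact mul_le_mul_of_nonneg_left
        (add_le_add (Real.exp_le_exp.2 e1) (Real.exp_le_exp.2 e2)) hK.le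
    exact ⟨(hbd m x hx 0 k).trans hle, (hbd m x hx 1 k).trans hle⟩
  have hs := fun m => hΦ.dsol hb₁ hb₂ m k
  -- the entries at `m` recovered from the Wronskians with the two columns at `l`
  have rec0 : ∀ x ∈ Icc (0:ℝ) 1, ∀ m, Φ m x 0 k =
      Φ l x 0 1 * (cexp (-(I * (b₁ + b₂) * l) * x) * (Φ l x 0 0 * Φ m x 1 k - Φ l x 1 0 * Φ m x 0 k))
      - Φ l x 0 0 *
        (cexp (-(I * (b₁ + b₂) * l) * x) * (Φ l x 0 1 * Φ m x 1 k - Φ l x 1 1 * Φ m x 0 k)) := by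
    intro x hx m
    linear_combination (-(Φ m x 0 k)) * hΦ.det hb₁ hb₂ l hx
  have rec1 : ∀ x ∈ Icc (0:ℝ) 1, ∀ m, Φ m x 1 k =
      Φ l x 1 1 * (cexp (-(I * (b₁ + b₂) * l) * x) * (Φ l x 0 0 * Φ m x 1 k - Φ l x 1 0 * Φ m x 0 k))
      - Φ l x 1 0 *
        (cexp (-(I * (b₁ + b₂) * l) * x) * (Φ l x 0 1 * Φ m x 1 k - Φ l x 1 1 * Φ m x 0 k)) := by
    intro x hx m
    linear_combination (-(Φ m x 1 k)) * hΦ.det hb₁ hb₂ l hx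
  have wc := fun (i : Fin 2) (x : ℝ) (hx : x ∈ Icc (0:ℝ) 1) =>
    (hΦ.dsol hb₁ hb₂ l i).wronskian_cont (Y₁ := fun m x => Φ m x 0 k) (Y₂ := fun m x => Φ m x 1 k)
      hs (fun m => (hΦ m).1 0 k) (fun m => (hΦ m).1 1 k) hB hx
  have hc : ∀ x ∈ Icc (0:ℝ) 1, Tendsto (fun m => Φ m x 0 k) (𝓝 l) (𝓝 (Φ l x 0 k)) ∧
      Tendsto (fun m => Φ m x 1 k) (𝓝 l) (𝓝 (Φ l x 1 k)) := by
    intro x hx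
    constructor
    · have := ((wc 0 x hx).const_mul (Φ l x 0 1)).sub ((wc 1 x hx).const_mul (Φ l x 0 0))
      rw [← rec0 x hx l] at this
      exact this.congr fun m => (rec0 x hx m).symm
    · have := ((wc 0 x hx).const_mul (Φ l x 1 1)).sub ((wc 1 x hx).const_mul (Φ l x 1 0))
      rw [← rec1 x hx l] at this
      exact this.congr fun m => (rec1 x hx m).symm
  have wd := fun (i : Fin 2) =>
    (hΦ.dsol hb₁ hb₂ l i).wronskian_diff (Y₁ := fun m x => Φ m x 0 k) (Y₂ := fun m x => Φ m x 1 k)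
      hs (fun m => (hΦ m).1 0 k) (fun m => (hΦ m).1 1 k) hB hc
  have h1 : (1:ℝ) ∈ Icc (0:ℝ) 1 := by simp
  have d0 : DifferentiableAt ℂ (fun m => Φ m 1 0 k) l := by
    rw [funext (rec0 1 h1)]
    exact ((wd 0).const_mul _).sub ((wd 1).const_mul _)
  have d1 : DifferentiableAt ℂ (fun m => Φ m 1 1 k) l := by
    rw [funext (rec1 1 h1)]
    exact ((wd 0).const_mul _).sub ((wd 1).const_mul _)
  fin_cases j
  · exact d0
  · exact d1

/-! ### The characteristic determinant -/

/-- Expansion of `Δ` in the entries of the fundamental matrix; the `J₃₄` term uses Liouville's formula. -/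
lemma charDet_eq (hb₁ : b₁ < 0) (hb₂ : 0 < b₂) (hΦ : IsFundSol b₁ b₂ Q₁₂ Q₂₁ Φ)
    (aM : Fin 2 → Fin 4 → ℂ) (l : ℂ) :
    charDet aM Φ l = Jdet aM 0 1 + Jdet aM 2 3 * cexp (I * (b₁ + b₂) * l) +
      Jdet aM 2 1 * Φ l 1 0 0 + Jdet aM 0 2 * Φ l 1 0 1 + Jdet aM 3 1 * Φ l 1 1 0 +
      Jdet aM 0 3 * Φ l 1 1 1 := by
  have hd : Φ l 1 0 0 * Φ l 1 1 1 - Φ l 1 1 0 * Φ l 1 0 1 = cexp (I * (b₁ + b₂) * l) := by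
    have h := hΦ.det hb₁ hb₂ l (x := 1) (by simp)
    rw [ofReal_one, mul_one, Complex.exp_neg] at h
    field_simp at h
    exact h
  simp only [charDet, bform, (hΦ l).1]
  rw [← hd]
  simp [Jdet]
  ring

lemma charDet_entire (hb₁ : b₁ < 0) (hb₂ : 0 < b₂) (hΦ : IsFundSol b₁ b₂ Q₁₂ Q₂₁ Φ)
    (hq₁ : IntervalIntegrable Q₁₂ volume 0 1) (hq₂ : IntervalIntegrable Q₂₁ volume 0 1)
    (aM : Fin 2 → Fin 4 → ℂ) : Differentiable ℂ (charDet aM Φ) := by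
  rw [funext (charDet_eq hb₁ hb₂ hΦ aM)]
  have := hΦ.entire hb₁ hb₂ hq₁ hq₂
  have h00 := this 0 0
  have h01 := this 0 1
  have h10 := this 1 0
  have h11 := this 1 1
  fun_prop

lemma norm_exp_aux' (a : ℝ) (l : ℂ) : ‖cexp (I * a * l)‖ = Real.exp (-a * l.im) := by
  rw [Complex.norm_exp]
  congr 1
  simp

lemma charDet_le (hb₁ : b₁ < 0) (hb₂ : 0 < b₂) (hΦ : IsFundSol b₁ b₂ Q₁₂ Q₂₁ Φ)
    (hq₁ : IntervalIntegrable Q₁₂ volume 0 1) (hq₂ : IntervalIntegrable Q₂₁ volume 0 1)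
    (aM : Fin 2 → Fin 4 → ℂ) :
    ∃ M : ℝ, 0 < M ∧ ∀ l : ℂ,
      ‖charDet aM Φ l‖ ≤ M * (Real.exp (-b₁ * l.im) + Real.exp (-b₂ * l.im)) := by
  obtain ⟨K, hK, hbd⟩ := hΦ.norm_le hb₁ hb₂ hq₁ hq₂
  refine ⟨‖Jdet aM 0 1‖ + ‖Jdet aM 2 3‖ + ‖Jdet aM 2 1‖ * K + ‖Jdet aM 0 2‖ * K +
    ‖Jdet aM 3 1‖ * K + ‖Jdet aM 0 3‖ * K + 1, by positivity, fun l => ?_⟩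
  set E := Real.exp (-b₁ * l.im) + Real.exp (-b₂ * l.im) with hE
  have hb : ∀ j k, ‖Φ l 1 j k‖ ≤ K * E := fun j k => by
    have := hbd l 1 (by simp) j k
    rw [mul_one, mul_one] at this
    exact this
  have p1 := Real.exp_pos (-b₁ * l.im)
  have p2 := Real.exp_pos (-b₂ * l.im)
  -- one of the two exponents is nonnegative, the other nonpositive
  have hE1 : 1 ≤ E ∧ Real.exp (-(b₁ + b₂) * l.im) ≤ E := by
    have e : Real.exp (-(b₁ + b₂) * l.im) = Real.exp (-b₁ * l.im) * Real.exp (-b₂ * l.im) := by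
      rw [← Real.exp_add]; ring_nf
    rw [e]
    rcases le_total 0 l.im with h | h
    · have h1 : 1 ≤ Real.exp (-b₁ * l.im) := Real.one_le_exp (by nlinarith)
      have h2 : Real.exp (-b₂ * l.im) ≤ 1 := Real.exp_le_one_iff.2 (by nlinarith)
      constructor
      · linarith
      · nlinarith
    · have h1 : 1 ≤ Real.exp (-b₂ * l.im) := Real.one_le_exp (by nlinarith)
      have h2 : Real.exp (-b₁ * l.im) ≤ 1 := Real.exp_le_one_iff.2 (by nlinarith)
      constructor
      · linarith
      · nlinarith
  have hexp : ‖cexp (I * (b₁ + b₂) * l)‖ ≤ E := by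
    have := norm_exp_aux' (b₁ + b₂) l
    push_cast at this
    rw [this]; exact hE1.2
  rw [charDet_eq hb₁ hb₂ hΦ]
  refine (norm_add_le_of_le (norm_add_le_of_le (norm_add_le_of_le (norm_add_le_of_le
    (norm_add_le_of_le (le_mul_of_one_le_right (norm_nonneg _) hE1.1)
    (norm_mul_le_of_le le_rfl hexp)) (norm_mul_le_of_le le_rfl (hb 0 0)))
    (norm_mul_le_of_le le_rfl (hb 0 1))) (norm_mul_le_of_le le_rfl (hb 1 0)))
    (norm_mul_le_of_le le_rfl (hb 1 1))).trans ?_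
  have : 0 ≤ E := by linarith [hE1.1]
  nlinarith

/-- Along `(b₂ - b₁) Im λ → +∞` the free exponential `e^{i b₁ λ}` dominates. -/
lemma charDet_tendsto_up (hb₁ : b₁ < 0) (hb₂ : 0 < b₂) (hΦ : IsFundSol b₁ b₂ Q₁₂ Q₂₁ Φ)
    (hq₁ : IntervalIntegrable Q₁₂ volume 0 1) (hq₂ : IntervalIntegrable Q₂₁ volume 0 1)
    (aM : Fin 2 → Fin 4 → ℂ) :
    Tendsto (fun l => cexp (-(I * b₁ * l)) * charDet aM Φ l)
      (comap (fun l : ℂ => (b₂ - b₁) * l.im) atTop) (𝓝 (Jdet aM 2 1)) := by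
  have L := fun k => DSol.limits hq₁ hq₂ (fun l => hΦ.dsol hb₁ hb₂ l k)
    (fun l => (hΦ l).1 0 k) (fun l => (hΦ l).1 1 k)
  have hF : Tendsto (fun l : ℂ => (b₂ - b₁) * l.im)
    (comap (fun l : ℂ => (b₂ - b₁) * l.im) atTop) atTop := tendsto_comap
  have hd : 0 < b₂ - b₁ := by linarith
  have him : Tendsto (fun l : ℂ => l.im) (comap (fun l : ℂ => (b₂ - b₁) * l.im) atTop) atTop :=
    (tendsto_const_mul_atTop_of_pos hd).1 hF
  have e1 : Tendsto (fun l : ℂ => cexp (-(I * b₁ * l)))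
      (comap (fun l : ℂ => (b₂ - b₁) * l.im) atTop) (𝓝 0) := by
    rw [tendsto_zero_iff_norm_tendsto_zero]
    refine ((exp_neg_mul_tendsto (neg_pos.2 hb₁)).comp him).congr fun l => ?_
    have := norm_exp_aux b₁ l 1
    rw [ofReal_one, mul_one, mul_one] at this
    rw [this, Function.comp]; ring_nf
  have e2 : Tendsto (fun l : ℂ => cexp (I * b₂ * l))
      (comap (fun l : ℂ => (b₂ - b₁) * l.im) atTop) (𝓝 0) := by
    rw [tendsto_zero_iff_norm_tendsto_zero]
    refine ((exp_neg_mul_tendsto hb₂).comp him).congr fun l => ?_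
    rw [norm_exp_aux', Function.comp]; ring_nf
  have T := (((((e1.const_mul (Jdet aM 0 1)).add (e2.const_mul (Jdet aM 2 3))).add
    ((L 0).1.const_mul (Jdet aM 2 1))).add ((L 1).1.const_mul (Jdet aM 0 2))).add
    ((L 0).2.const_mul (Jdet aM 3 1))).add ((L 1).2.const_mul (Jdet aM 0 3))
  simp only [Fin.isValue, if_true, zero_ne_one, if_false, mul_zero, mul_one, add_zero,
    zero_add] at T
  refine T.congr fun l => ?_
  rw [charDet_eq hb₁ hb₂ hΦ]
  have : cexp (I * b₂ * l) = cexp (-(I * b₁ * l)) * cexp (I * (b₁ + b₂) * l) := by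
    rw [← Complex.exp_add]; ring_nf
  rw [this]; ring

/-- Along `(b₁ - b₂) Im λ → +∞` the free exponential `e^{i b₂ λ}` dominates. -/
lemma charDet_tendsto_down (hb₁ : b₁ < 0) (hb₂ : 0 < b₂) (hΦ : IsFundSol b₁ b₂ Q₁₂ Q₂₁ Φ)
    (hq₁ : IntervalIntegrable Q₁₂ volume 0 1) (hq₂ : IntervalIntegrable Q₂₁ volume 0 1)
    (aM : Fin 2 → Fin 4 → ℂ) :
    Tendsto (fun l => cexp (-(I * b₂ * l)) * charDet aM Φ l)
      (comap (fun l : ℂ => (b₁ - b₂) * l.im) atTop) (𝓝 (Jdet aM 0 3)) := by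
  have L := fun k => DSol.limits hq₂ hq₁ (fun l => (hΦ.dsol hb₁ hb₂ l k).swap)
    (fun l => (hΦ l).1 1 k) (fun l => (hΦ l).1 0 k)
  have hF : Tendsto (fun l : ℂ => (b₁ - b₂) * l.im)
    (comap (fun l : ℂ => (b₁ - b₂) * l.im) atTop) atTop := tendsto_comap
  have hd : 0 < b₂ - b₁ := by linarith
  have him : Tendsto (fun l : ℂ => -l.im) (comap (fun l : ℂ => (b₁ - b₂) * l.im) atTop) atTop :=
    (tendsto_const_mul_atTop_of_pos hd).1 (hF.congr fun l => by ring)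
  have e1 : Tendsto (fun l : ℂ => cexp (-(I * b₂ * l)))
      (comap (fun l : ℂ => (b₁ - b₂) * l.im) atTop) (𝓝 0) := by
    rw [tendsto_zero_iff_norm_tendsto_zero]
    refine ((exp_neg_mul_tendsto hb₂).comp him).congr fun l => ?_
    have := norm_exp_aux b₂ l 1
    rw [ofReal_one, mul_one, mul_one] at this
    rw [this, Function.comp]; ring_nf
  have e2 : Tendsto (fun l : ℂ => cexp (I * b₁ * l))
      (comap (fun l : ℂ => (b₁ - b₂) * l.im) atTop) (𝓝 0) := by
    rw [tendsto_zero_iff_norm_tendsto_zero]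
    refine ((exp_neg_mul_tendsto (neg_pos.2 hb₁)).comp him).congr fun l => ?_
    rw [norm_exp_aux', Function.comp]; ring_nf
  have T := (((((e1.const_mul (Jdet aM 0 1)).add (e2.const_mul (Jdet aM 2 3))).add
    ((L 0).2.const_mul (Jdet aM 2 1))).add ((L 1).2.const_mul (Jdet aM 0 2))).add
    ((L 0).1.const_mul (Jdet aM 3 1))).add ((L 1).1.const_mul (Jdet aM 0 3))
  simp only [Fin.isValue, if_true, one_ne_zero, if_false, mul_zero, mul_one, add_zero,
    zero_add] at T
  refine T.congr fun l => ?_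
  rw [charDet_eq hb₁ hb₂ hΦ]
  have : cexp (I * b₁ * l) = cexp (-(I * b₂ * l)) * cexp (I * (b₁ + b₂) * l) := by
    rw [← Complex.exp_add]; ring_nf
  rw [this]; ring

end Fundamental

/-! ### Normal families and the minimum modulus -/

/-- Montel's theorem on a disc, for entire functions. -/
lemma montel_closedBall {f : ℕ → ℂ → ℂ} {R M : ℝ} (hf : ∀ n, Differentiable ℂ (f n))
    (hM : ∀ n, ∀ z ∈ Metric.closedBall (0:ℂ) (R + 1), ‖f n z‖ ≤ M) :
    ∃ (G : ℂ → ℂ) (φ : ℕ → ℕ), StrictMono φ ∧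
      TendstoUniformlyOn (fun n => f (φ n)) G atTop (Metric.closedBall 0 R) := by
  have hderiv : ∀ n, ∀ z ∈ Metric.closedBall (0:ℂ) R, ‖deriv (f n) z‖ ≤ M := by
    intro n z hz
    have := Complex.norm_deriv_le_of_forall_mem_sphere_norm_le (c := z) (R := 1) (C := M)
      one_pos (hf n).diffContOnCl (fun w hw => hM n w ?_)
    · simpa using this
    · rw [mem_closedBall_zero_iff] at hz ⊢
      rw [mem_sphere_iff_norm] at hw
      linarith [norm_le_norm_add_norm_sub' w z]
  let X := Metric.closedBall (0:ℂ) R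
  have : CompactSpace X := isCompact_iff_compactSpace.1 (isCompact_closedBall 0 R)
  let F : ℕ → BoundedContinuousFunction X ℂ := fun n =>
    BoundedContinuousFunction.mkOfCompact
      ⟨fun x : X => f n x, (hf n).continuous.comp continuous_subtype_val⟩
  have hcpt : IsCompact (closure (range F)) := by
    refine BoundedContinuousFunction.arzela_ascoli (Metric.closedBall (0:ℂ) M)
      (isCompact_closedBall 0 M) _ ?_ ?_
    · rintro _ x ⟨n, rfl⟩
      rw [mem_closedBall_zero_iff]
      exact hM n x (Metric.closedBall_subset_closedBall (by linarith) x.2)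
    · refine (LipschitzWith.uniformEquicontinuous _ M.toNNReal ?_).equicontinuous
      rintro ⟨_, n, rfl⟩
      refine LipschitzWith.of_dist_le_mul fun x y => ?_
      rw [dist_eq_norm, dist_comm, Subtype.dist_eq, dist_eq_norm]
      have hM0 : 0 ≤ M := (norm_nonneg _).trans (hderiv n x x.2)
      have := (convex_closedBall (0:ℂ) R).norm_image_sub_le_of_norm_deriv_le
        (fun z _ => (hf n) z) (hderiv n) x.2 y.2
      rw [norm_sub_rev] at this
      rw [Real.coe_toNNReal _ hM0]
      exact this
  obtain ⟨g, -, φ, hφ, hg⟩ := hcpt.tendsto_subseq (x := F) fun n => subset_closure ⟨n, rfl⟩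
  classical
  refine ⟨fun z => if h : z ∈ Metric.closedBall (0:ℂ) R then g ⟨z, h⟩ else 0, φ, hφ, ?_⟩
  rw [Metric.tendstoUniformlyOn_iff]
  intro ε hε
  filter_upwards [Metric.tendsto_nhds.1 hg ε hε] with n hn z hz
  rw [dif_pos hz, dist_comm]
  exact (BoundedContinuousFunction.dist_coe_le_dist (f := F (φ n)) (g := g) ⟨z, hz⟩).trans_lt hn

/-- An entire function that is bounded on a disc, not uniformly small there, and zero-free near
the centre, is bounded below at the centre, with a constant depending only on these data. -/
lemma norm_center_ge {r M c ε : ℝ} (hr : 0 < r) (hc : 0 < c) (hε : 0 < ε) :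
    ∃ C > 0, ∀ f : ℂ → ℂ, Differentiable ℂ f →
      (∀ z ∈ Metric.closedBall (0:ℂ) (r + 2), ‖f z‖ ≤ M) →
      (∃ z ∈ Metric.closedBall (0:ℂ) r, c ≤ ‖f z‖) →
      (∀ z ∈ Metric.ball (0:ℂ) ε, f z ≠ 0) → C ≤ ‖f 0‖ := by
  by_contra hcon
  push Not at hcon
  choose f hf hM hz hne hlt using fun n : ℕ =>
    hcon (1 / ((n:ℝ) + 1)) (by positivity)
  choose w hw hcw using hz
  obtain ⟨G, φ, hφ, hG⟩ := montel_closedBall (R := r + 1) hf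
    (fun n z hz => hM n z (by convert hz using 2; ring))
  obtain ⟨w₀, hw₀, ψ, hψ, hwψ⟩ := (isCompact_closedBall (0:ℂ) r).tendsto_subseq
    (x := fun n => w (φ n)) fun n => hw _
  have hd : DifferentiableOn ℂ G (Metric.ball 0 (r + 1)) :=
    (hG.mono Metric.ball_subset_closedBall).tendstoLocallyUniformlyOn.differentiableOn
      (Eventually.of_forall fun n => (hf _).differentiableOn) Metric.isOpen_ball
  have hsub : Metric.closedBall (0:ℂ) r ⊆ Metric.ball 0 (r + 1) :=
    Metric.closedBall_subset_ball (by linarith)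
  have h0mem : (0:ℂ) ∈ Metric.ball (0:ℂ) (r + 1) := Metric.mem_ball_self (by linarith)
  have hG0 : G 0 = 0 := by
    have h1 := hG.tendsto_at (Metric.ball_subset_closedBall h0mem)
    have h2 : Tendsto (fun n => f (φ n) 0) atTop (𝓝 0) := by
      refine squeeze_zero_norm (fun n => (hlt (φ n)).le) ?_
      exact tendsto_one_div_add_atTop_nhds_zero_nat.comp hφ.tendsto_atTop
    exact tendsto_nhds_unique h1 h2
  have hGw : c ≤ ‖G w₀‖ := by
    have hcont : ContinuousAt G w₀ :=
      (hd.differentiableAt (Metric.isOpen_ball.mem_nhds (hsub hw₀))).continuousAt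
    refine le_of_forall_pos_sub_le fun η hη => ?_
    have h1 := hψ.tendsto_atTop.eventually (Metric.tendstoUniformlyOn_iff.1 hG (η / 2) (by linarith))
    have h2 := Metric.tendsto_nhds.1 (hcont.tendsto.comp hwψ) (η / 2) (by linarith)
    obtain ⟨n, h1, h2⟩ := (h1.and h2).exists
    have h3 := h1 (w (φ (ψ n))) (Metric.closedBall_subset_closedBall (by linarith) (hw _))
    simp only [Function.comp, dist_eq_norm] at h2 h3
    have h4 := hcw (φ (ψ n))
    have h5 := norm_le_norm_add_norm_sub' (f (φ (ψ n)) (w (φ (ψ n)))) (G (w (φ (ψ n))))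
    have h6 := norm_le_norm_add_norm_sub' (G (w (φ (ψ n)))) (G w₀)
    rw [norm_sub_rev] at h5
    linarith
  have hana : AnalyticOnNhd ℂ G (Metric.ball 0 (r + 1)) := hd.analyticOnNhd Metric.isOpen_ball
  have hiso : ∀ᶠ z in 𝓝[≠] (0:ℂ), G z ≠ 0 := by
    refine (hana 0 h0mem).eventually_eq_zero_or_eventually_ne_zero.resolve_left fun h => ?_
    have := hana.eqOn_zero_of_preconnected_of_eventuallyEq_zero
      (convex_ball _ _).isPreconnected h0mem h (hsub hw₀)
    rw [this] at hGw
    simp at hGw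
    linarith
  rw [eventually_nhdsWithin_iff, Metric.eventually_nhds_iff] at hiso
  obtain ⟨δ₀, hδ₀, hiso⟩ := hiso
  set δ := min (min δ₀ ε) r / 2 with hδ
  have hmin : 0 < min (min δ₀ ε) r := by positivity
  have hδpos : 0 < δ := by positivity
  have hδ1 : δ < δ₀ := by
    have := (min_le_left (min δ₀ ε) r).trans (min_le_left _ _); linarith
  have hδ2 : δ < ε := by
    have := (min_le_left (min δ₀ ε) r).trans (min_le_right _ _); linarith
  have hδ3 : δ < r := by
    have := min_le_right (min δ₀ ε) r; linarith
  have hsph : Metric.sphere (0:ℂ) δ ⊆ Metric.closedBall 0 r :=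
    Metric.sphere_subset_closedBall.trans (Metric.closedBall_subset_closedBall hδ3.le)
  obtain ⟨z₁, hz₁, hmin₁⟩ := (isCompact_sphere (0:ℂ) δ).exists_isMinOn
    (NormedSpace.sphere_nonempty.2 hδpos.le)
    ((hd.continuousOn.mono (hsph.trans hsub)).norm)
  set m := ‖G z₁‖ with hm
  have hmpos : 0 < m := by
    refine norm_pos_iff.2 (hiso ?_ ?_)
    · rw [Metric.mem_sphere.1 hz₁]; exact hδ1
    · exact ne_zero_of_mem_sphere hδpos.ne' ⟨z₁, hz₁⟩
  have h1 := Metric.tendstoUniformlyOn_iff.1 hG (m / 2) (by linarith)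
  have h2 : ∀ᶠ n : ℕ in atTop, 1 / ((φ n : ℝ) + 1) < m / 2 :=
    (tendsto_one_div_add_atTop_nhds_zero_nat.comp hφ.tendsto_atTop).eventually
      (gt_mem_nhds (show (0:ℝ) < m / 2 by linarith))
  obtain ⟨n, h1, h2⟩ := (h1.and h2).exists
  have hcl : closure (Metric.ball (0:ℂ) δ) ⊆ Metric.ball 0 ε :=
    Metric.closure_ball_subset_closedBall.trans (Metric.closedBall_subset_ball hδ2)
  have hmax : ‖(f (φ n) 0)⁻¹‖ ≤ (m / 2)⁻¹ := by
    refine Complex.norm_le_of_forall_mem_frontier_norm_le (f := fun z => (f (φ n) z)⁻¹)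
      (Metric.isBounded_ball (x := (0:ℂ)) (r := δ))
      ((hf _).diffContOnCl.inv fun z hz => hne _ z (hcl hz)) ?_
      (subset_closure (Metric.mem_ball_self hδpos))
    intro z hz
    rw [frontier_ball _ hδpos.ne'] at hz
    have h3 := h1 z (Metric.closedBall_subset_closedBall (by linarith) (hsph hz))
    have h4 : m ≤ ‖G z‖ := hmin₁ hz
    rw [dist_eq_norm] at h3
    have h5 := norm_le_norm_add_norm_sub' (G z) (f (φ n) z)
    rw [norm_inv]
    gcongr
    linarith
  rw [norm_inv] at hmax
  have hpos : 0 < ‖f (φ n) 0‖ := norm_pos_iff.2 (hne _ 0 (Metric.mem_ball_self hε))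
  have := (inv_le_inv₀ hpos (by linarith)).1 hmax
  linarith [hlt (φ n)]

/-! ### Entire functions of exponential type with dominant exponentials -/

section Entire

variable {b₁ b₂ : ℝ} {D : ℂ → ℂ}

lemma exists_of_tendsto_comap {a d : ℝ} {J : ℂ} (hJ : J ≠ 0)
    (h : Tendsto (fun l => cexp (-(I * a * l)) * D l) (comap (fun l : ℂ => d * l.im) atTop) (𝓝 J)) :
    ∃ A : ℝ, ∀ l : ℂ, A ≤ d * l.im → ‖J‖ / 2 * Real.exp (-a * l.im) ≤ ‖D l‖ := by
  have h1 := h.norm.eventually (lt_mem_nhds (half_lt_self (norm_pos_iff.2 hJ)))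
  rw [eventually_comap, eventually_atTop] at h1
  obtain ⟨A, hA⟩ := h1
  refine ⟨A, fun l hl => ?_⟩
  have h2 := hA _ hl l rfl
  rw [norm_mul, Complex.exp_neg, norm_inv, norm_exp_aux', inv_mul_eq_div,
    lt_div_iff₀ (Real.exp_pos _)] at h2
  exact h2.le

/-- The two-sided lower bound outside a horizontal strip. -/
lemma exists_strip (hb : b₁ < b₂) {J₁ J₂ : ℂ} (hJ₁ : J₁ ≠ 0) (hJ₂ : J₂ ≠ 0)
    (up : Tendsto (fun l => cexp (-(I * b₁ * l)) * D l)
      (comap (fun l : ℂ => (b₂ - b₁) * l.im) atTop) (𝓝 J₁))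
    (down : Tendsto (fun l => cexp (-(I * b₂ * l)) * D l)
      (comap (fun l : ℂ => (b₁ - b₂) * l.im) atTop) (𝓝 J₂)) :
    ∃ h > 0, ∃ c > 0, ∀ l : ℂ, h ≤ |l.im| →
      c * (Real.exp (-b₁ * l.im) + Real.exp (-b₂ * l.im)) ≤ ‖D l‖ := by
  obtain ⟨A₁, hA₁⟩ := exists_of_tendsto_comap hJ₁ up
  obtain ⟨A₂, hA₂⟩ := exists_of_tendsto_comap hJ₂ down
  have hd : 0 < b₂ - b₁ := by linarith
  have n1 := norm_pos_iff.2 hJ₁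
  have n2 := norm_pos_iff.2 hJ₂
  refine ⟨max 1 (max (A₁ / (b₂ - b₁)) (A₂ / (b₂ - b₁))), by positivity,
    min ‖J₁‖ ‖J₂‖ / 4, by positivity, fun l hl => ?_⟩
  have m1 := min_le_left ‖J₁‖ ‖J₂‖
  have m2 := min_le_right ‖J₁‖ ‖J₂‖
  have m0 : 0 < min ‖J₁‖ ‖J₂‖ := by positivity
  obtain ⟨l1, hl'⟩ := max_le_iff.1 hl
  obtain ⟨l2, l3⟩ := max_le_iff.1 hl'
  rw [div_le_iff₀ hd] at l2 l3
  have p1 := Real.exp_pos (-b₁ * l.im)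
  have p2 := Real.exp_pos (-b₂ * l.im)
  rcases le_total 0 l.im with h | h
  · rw [abs_of_nonneg h] at l2
    have h1 := hA₁ l (by linarith)
    have h2 : Real.exp (-b₂ * l.im) ≤ Real.exp (-b₁ * l.im) :=
      Real.exp_le_exp.2 (by nlinarith)
    nlinarith
  · rw [abs_of_nonpos h] at l3
    have h1 := hA₂ l (by linarith)
    have h2 : Real.exp (-b₁ * l.im) ≤ Real.exp (-b₂ * l.im) :=
      Real.exp_le_exp.2 (by nlinarith)
    nlinarith

/-- Inside the strip, translates of `D` form a normal family to which `norm_center_ge` applies. -/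
lemma lower_away_from_zeros (hb₁ : b₁ < 0) (hb₂ : 0 < b₂) (hD : Differentiable ℂ D)
    {M h c : ℝ} (hM : 0 < M)
    (hle : ∀ l : ℂ, ‖D l‖ ≤ M * (Real.exp (-b₁ * l.im) + Real.exp (-b₂ * l.im)))
    (hh : 0 < h) (hc : 0 < c)
    (hstrip : ∀ l : ℂ, h ≤ |l.im| →
      c * (Real.exp (-b₁ * l.im) + Real.exp (-b₂ * l.im)) ≤ ‖D l‖)
    {ε : ℝ} (hε : 0 < ε) :
    ∃ C : ℝ, 0 < C ∧ ∀ l : ℂ, (∀ μ : ℂ, D μ = 0 → ε ≤ dist l μ) →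
      C * (Real.exp (-b₁ * l.im) + Real.exp (-b₂ * l.im)) ≤ ‖D l‖ := by
  have hEle : ∀ (R : ℝ) (l : ℂ), |l.im| ≤ R →
      Real.exp (-b₁ * l.im) + Real.exp (-b₂ * l.im) ≤ Real.exp (-b₁ * R) + Real.exp (b₂ * R) := by
    intro R l hl
    obtain ⟨h1, h2⟩ := abs_le.1 hl
    refine add_le_add (Real.exp_le_exp.2 ?_) (Real.exp_le_exp.2 ?_) <;> nlinarith
  -- the value at the edge of the strip `Im = h` is at least `c`
  obtain ⟨C, hC, hcen⟩ := norm_center_ge (r := 2 * h)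
    (M := M * (Real.exp (-b₁ * (3 * h + 2)) + Real.exp (b₂ * (3 * h + 2)))) (c := c) (ε := ε)
    (by linarith) hc hε
  set E := Real.exp (-b₁ * h) + Real.exp (b₂ * h) with hE
  have hEpos : 0 < E := by positivity
  refine ⟨min c (C / E), by positivity, fun l hl => ?_⟩
  have p1 := Real.exp_pos (-b₁ * l.im)
  have p2 := Real.exp_pos (-b₂ * l.im)
  rcases le_total h |l.im| with hl' | hl'
  · refine le_trans ?_ (hstrip l hl')
    gcongr
    exact min_le_left _ _
  · have h1 := hcen (fun z => D (l + z)) (hD.comp (by fun_prop)) ?_ ?_ ?_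
    · simp only [add_zero] at h1
      refine le_trans ?_ h1
      calc _ ≤ C / E * E := by
            refine mul_le_mul (min_le_right _ _) (hEle h l hl') (by positivity) (by positivity)
        _ = C := by field_simp
    · intro z hz
      rw [mem_closedBall_zero_iff] at hz
      refine (hle _).trans (mul_le_mul_of_nonneg_left (hEle _ _ ?_) hM.le)
      rw [add_im]
      have := abs_im_le_norm z
      have := abs_add_le l.im z.im
      linarith
    · have hlo := abs_le.1 hl'
      refine ⟨((h - l.im : ℝ) : ℂ) * I, ?_, ?_⟩
      · rw [mem_closedBall_zero_iff, norm_mul, norm_I, mul_one, norm_real, Real.norm_eq_abs,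
          abs_of_nonneg (by linarith)]
        linarith
      · have him : (l + ((h - l.im : ℝ) : ℂ) * I).im = h := by simp
        have h2 := hstrip (l + ((h - l.im : ℝ) : ℂ) * I) (by rw [him]; exact le_abs_self h)
        refine le_trans ?_ h2
        rw [him]
        have : 1 ≤ Real.exp (-b₁ * h) := Real.one_le_exp (by nlinarith)
        have := Real.exp_pos (-b₂ * h)
        exact le_mul_of_one_le_right hc.le (by linarith)
    · intro z hz h0
      have h3 := hl _ h0
      rw [mem_ball_zero_iff] at hz
      rw [dist_eq_norm] at h3
      simp at h3
      linarith

/-- A bounded nonvanishing analytic germ at infinity has at most a zero of finite order there, so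
it cannot decay exponentially along a ray. -/
lemma not_exp_decay {G : ℂ → ℂ} {R B s A : ℝ} (hR : 0 < R) (hs : 0 < s)
    (hd : ∀ z : ℂ, R < ‖z‖ → DifferentiableAt ℂ G z) (hne : ∀ z : ℂ, R < ‖z‖ → G z ≠ 0)
    (hB : ∀ z : ℂ, R < ‖z‖ → ‖G z‖ ≤ B)
    (hdec : ∀ t : ℝ, R < t → ‖G (-(t * I))‖ ≤ A * Real.exp (-(s * t))) : False := by
  set S := Metric.ball (0:ℂ) R⁻¹ with hS
  have hS0 : S ∈ 𝓝 (0:ℂ) := Metric.ball_mem_nhds _ (by positivity)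
  have hinv : ∀ w ∈ S \ {0}, w ≠ 0 ∧ R < ‖w⁻¹‖ := by
    rintro w ⟨hw, hw0⟩
    rw [hS, mem_ball_zero_iff] at hw
    refine ⟨hw0, ?_⟩
    rw [norm_inv]
    exact (lt_inv_comm₀ hR (norm_pos_iff.2 hw0)).2 hw
  set H : ℂ → ℂ := fun w => G w⁻¹ with hH
  have hHd : DifferentiableOn ℂ H (S \ {0}) := by
    intro w hw
    obtain ⟨h0, h1⟩ := hinv w hw
    exact ((hd _ h1).comp w (differentiableAt_inv h0)).differentiableWithinAt
  have hHb : BddAbove (norm ∘ H '' (S \ {0})) := by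
    refine ⟨B, ?_⟩
    rintro _ ⟨w, hw, rfl⟩
    exact hB _ (hinv w hw).2
  have hU := Complex.differentiableOn_update_limUnder_of_bddAbove hS0 hHd hHb
  set U := Function.update H 0 (limUnder (𝓝[≠] 0) H) with hUdef
  have hUa : AnalyticAt ℂ U 0 := hU.analyticAt hS0
  have hUH : ∀ w, w ≠ 0 → U w = G w⁻¹ := fun w hw => by
    rw [hUdef, Function.update_of_ne hw]
  have hnz : ¬ ∀ᶠ z in 𝓝 (0:ℂ), U z = 0 := by
    intro h
    have h1 : ∀ᶠ z in 𝓝[≠] (0:ℂ), U z = 0 := nhdsWithin_le_nhds h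
    have h2 : ∀ᶠ z in 𝓝[≠] (0:ℂ), z ∈ S \ {0} := by
      filter_upwards [nhdsWithin_le_nhds hS0, self_mem_nhdsWithin] with z h1 h2 using ⟨h1, h2⟩
    obtain ⟨z, h1, h2⟩ := (h1.and h2).exists
    rw [hUH z (hinv z h2).1] at h1
    exact hne _ (hinv z h2).2 h1
  obtain ⟨n, k, hk, hk0, hUk⟩ := hUa.exists_eventuallyEq_pow_smul_nonzero_iff.2 hnz
  have hw : Tendsto (fun t : ℝ => (t:ℂ)⁻¹ * I) atTop (𝓝 0) := by
    have : Tendsto (fun t : ℝ => ((t⁻¹ : ℝ) : ℂ) * I) atTop (𝓝 (((0:ℝ):ℂ) * I)) :=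
      ((continuous_ofReal.tendsto 0).comp tendsto_inv_atTop_zero).mul_const I
    simpa using this
  have hlim : Tendsto (fun t : ℝ => ‖k ((t:ℂ)⁻¹ * I)‖) atTop (𝓝 ‖k 0‖) :=
    (hk.continuousAt.tendsto.comp hw).norm
  have hlim0 : Tendsto (fun t : ℝ => ‖k ((t:ℂ)⁻¹ * I)‖) atTop (𝓝 0) := by
    have hmaj : Tendsto (fun t : ℝ => A * (t ^ n * Real.exp (-s * t))) atTop (𝓝 0) := by
      have := tendsto_rpow_mul_exp_neg_mul_atTop_nhds_zero (n:ℝ) s hs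
      simpa using this.const_mul A
    refine squeeze_zero' (Eventually.of_forall fun _ => norm_nonneg _) ?_ hmaj
    filter_upwards [hw.eventually hUk, eventually_gt_atTop R] with t ht htR
    have ht0 : 0 < t := hR.trans htR
    have htc : (t:ℂ) ≠ 0 := by exact_mod_cast ht0.ne'
    rw [hUH _ (mul_ne_zero (inv_ne_zero htc) I_ne_zero)] at ht
    have e : ((t:ℂ)⁻¹ * I)⁻¹ = -(t * I) := by
      rw [mul_inv, inv_inv, inv_I]; ring
    have h1 := hdec t htR
    rw [← e, ht, sub_zero, norm_smul, norm_pow, norm_mul, norm_inv, norm_I, mul_one, norm_real,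
      Real.norm_eq_abs, abs_of_pos ht0, inv_pow, inv_mul_le_iff₀ (by positivity)] at h1
    calc _ ≤ _ := h1
      _ = _ := by rw [neg_mul]; ring
  exact hk0 (norm_eq_zero.1 (tendsto_nhds_unique hlim hlim0))

lemma infinite_zeros (hb₁ : b₁ < 0) (hb₂ : 0 < b₂) (hD : Differentiable ℂ D) {C : ℝ} (hC : 0 < C)
    (hlow : ∀ l : ℂ, (∀ μ : ℂ, D μ = 0 → 1 ≤ dist l μ) →
      C * (Real.exp (-b₁ * l.im) + Real.exp (-b₂ * l.im)) ≤ ‖D l‖) :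
    {l : ℂ | D l = 0}.Infinite := by
  intro hfin
  obtain ⟨R₀, hR₀⟩ := hfin.isBounded.exists_norm_le
  set R := max R₀ 0 + 1 with hR
  have hRpos : 0 < R := by positivity
  have hfar : ∀ z : ℂ, R < ‖z‖ →
      C * (Real.exp (-b₁ * z.im) + Real.exp (-b₂ * z.im)) ≤ ‖D z‖ := by
    intro z hz
    refine hlow z fun μ hμ => ?_
    have h1 := hR₀ μ hμ
    have h2 := norm_le_norm_add_norm_sub' z μ
    have h3 := le_max_left R₀ 0
    rw [dist_eq_norm]
    linarith
  have hnz : ∀ z : ℂ, R < ‖z‖ → D z ≠ 0 := by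
    intro z hz h0
    have := hfar z hz
    rw [h0, norm_zero] at this
    have : 0 < C * (Real.exp (-b₁ * z.im) + Real.exp (-b₂ * z.im)) := by positivity
    linarith
  have hnorm : ∀ z : ℂ, R < ‖z‖ → ‖cexp (I * b₁ * z) / D z‖ ≤
      C⁻¹ * (Real.exp (-b₁ * z.im) / (Real.exp (-b₁ * z.im) + Real.exp (-b₂ * z.im))) := by
    intro z hz
    rw [norm_div, norm_exp_aux']
    calc _ ≤ Real.exp (-b₁ * z.im) / (C * (Real.exp (-b₁ * z.im) + Real.exp (-b₂ * z.im))) := by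
          gcongr
          exact hfar z hz
      _ = _ := by field_simp
  refine not_exp_decay (G := fun z => cexp (I * b₁ * z) / D z) (R := R) (B := C⁻¹)
    (s := b₂ - b₁) (A := C⁻¹) hRpos (by linarith) ?_ ?_ ?_ ?_
  · intro z hz
    exact DifferentiableAt.div (by fun_prop) (hD z) (hnz z hz)
  · intro z hz
    exact div_ne_zero (Complex.exp_ne_zero _) (hnz z hz)
  · intro z hz
    refine (hnorm z hz).trans (mul_le_of_le_one_right (by positivity) ?_)
    rw [div_le_one (by positivity)]
    linarith [Real.exp_pos (-b₂ * z.im)]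
  · intro t ht
    have ht0 : 0 < t := hRpos.trans ht
    have hn : R < ‖-((t:ℂ) * I)‖ := by simpa [abs_of_pos ht0] using ht
    refine (hnorm _ hn).trans ?_
    have him : (-((t:ℂ) * I)).im = -t := by simp
    rw [him]
    gcongr
    rw [div_le_iff₀ (by positivity)]
    have e : Real.exp (-((b₂ - b₁) * t)) * Real.exp (-b₂ * -t) = Real.exp (-b₁ * -t) := by
      rw [← Real.exp_add]; ring_nf
    rw [mul_add, e]
    have : 0 < Real.exp (-((b₂ - b₁) * t)) * Real.exp (-b₁ * -t) := by positivity
    linarith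

end Entire

/-- For regular boundary conditions (`J₁₄ J₃₂ ≠ 0`):
(1) `Δ` has infinitely many zeros, all lying in some horizontal strip `Π_h`;
(2) away from `ε`-neighbourhoods of its zeros, `|Δ(λ)| ≥ C_ε (e^{-b₁ Im λ} + e^{-b₂ Im λ})`. -/
theorem riesz_dirac_stmt16 (b₁ b₂ : ℝ) (hb₁ : b₁ < 0) (hb₂ : 0 < b₂)
    (Q₁₂ Q₂₁ : ℝ → ℂ)
    (hQ₁₂ : IntegrableOn Q₁₂ (Set.Icc (0:ℝ) 1))
    (hQ₂₁ : IntegrableOn Q₂₁ (Set.Icc (0:ℝ) 1))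
    (Φ : ℂ → ℝ → Fin 2 → Fin 2 → ℂ)
    (hΦ : IsFundSol b₁ b₂ Q₁₂ Q₂₁ Φ)
    (aM : Fin 2 → Fin 4 → ℂ)
    (hreg : Jdet aM 0 3 * Jdet aM 2 1 ≠ 0) :
    ({l : ℂ | charDet aM Φ l = 0}).Infinite ∧
    (∃ h : ℝ, 0 < h ∧ ∀ l : ℂ, charDet aM Φ l = 0 → |l.im| ≤ h) ∧
    (∀ ε : ℝ, 0 < ε → ∃ C : ℝ, 0 < C ∧ ∀ l : ℂ,
      (∀ μ : ℂ, charDet aM Φ μ = 0 → ε ≤ dist l μ) →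
      C * (Real.exp (-b₁ * l.im) + Real.exp (-b₂ * l.im)) ≤ ‖charDet aM Φ l‖) := by
  have hq₁ := (intervalIntegrable_iff_integrableOn_Icc_of_le zero_le_one).2 hQ₁₂
  have hq₂ := (intervalIntegrable_iff_integrableOn_Icc_of_le zero_le_one).2 hQ₂₁
  have hD := charDet_entire hb₁ hb₂ hΦ hq₁ hq₂ aM
  obtain ⟨M, hM, hle⟩ := charDet_le hb₁ hb₂ hΦ hq₁ hq₂ aM
  obtain ⟨h, hh, c, hc, hstrip⟩ := exists_strip (hb₁.trans hb₂) (right_ne_zero_of_mul hreg)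
    (left_ne_zero_of_mul hreg) (charDet_tendsto_up hb₁ hb₂ hΦ hq₁ hq₂ aM)
    (charDet_tendsto_down hb₁ hb₂ hΦ hq₁ hq₂ aM)
  have part2 := fun (ε : ℝ) (hε : 0 < ε) =>
    lower_away_from_zeros hb₁ hb₂ hD hM hle hh hc hstrip hε
  obtain ⟨C, hC, hlow⟩ := part2 1 one_pos
  refine ⟨infinite_zeros hb₁ hb₂ hD hC hlow, ⟨h, hh, fun l hl => ?_⟩, part2⟩
  by_contra hcon
  have h1 := hstrip l (not_le.1 hcon).le
  rw [hl, norm_zero] at h1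
  have h2 : 0 < c * (Real.exp (-b₁ * l.im) + Real.exp (-b₂ * l.im)) := by positivity
  linarith
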